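/- Let k be a natural number and G a 2-connected graph with distinct vertices a, b such that every vertex v ∉ {a, b} has degree at least d in G. Suppose G has the property (inherited by all its subgraphs) that for any two vertices x, y there is a partition of V(G) into sets X ∋ x and Y ∋ y such that every vertex of X loses at most k neighbours when restricted to G[X], and similarly for Y. Then G contains an a–b path of length at least 2^(d/(k+2)). -/

import Mathlib

def TwoConnected {V : Type*} (H : SimpleGraph V) : Prop :=
  (∃ x y z : V, x ≠ y ∧ x ≠ z ∧ y ≠ z) ∧
  ∀ v : V, ((⊤ : H.Subgraph).deleteVerts {v}).coe.Connected

namespace SP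

section basics
variable {V : Type*}

inductive Conn (G : SimpleGraph V) (A : Set V) (u : V) : V → Prop
  | refl : u ∈ A → Conn G A u u
  | step {v w : V} : Conn G A u v → G.Adj v w → w ∈ A → Conn G A u w

inductive R (G : SimpleGraph V) : Set V → V → V → ℕ → Prop
  | nil {A : Set V} {u : V} : u ∈ A → R G A u u 0
  | cons {A : Set V} {u v w : V} {n : ℕ} : u ∈ A → G.Adj u v → R G (A \ {u}) v w n → R G A u w (n + 1)

def Reach (G : SimpleGraph V) (A : Set V) (u v : V) (n : ℕ) : Prop := ∃ m, n ≤ m ∧ R G A u v m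

def Connd (G : SimpleGraph V) (A : Set V) : Prop := ∀ u ∈ A, ∀ v ∈ A, Conn G A u v

def cmp (G : SimpleGraph V) (A : Set V) (v : V) : Set V := {z | Conn G A v z}

def Cut (G : SimpleGraph V) (W : Set V) (a b : V) : Prop :=
  ∀ w, ∀ v ∈ W, v ≠ w → ∃ e, (e = a ∨ e = b) ∧ Conn G (W \ {w}) v e

variable {G : SimpleGraph V} {A B : Set V} {u v w x y z : V} {n m : ℕ}

theorem Conn.left (h : Conn G A u v) : u ∈ A := by
  induction h with
  | refl h => exact h
  | step _ _ _ ih => exact ih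

theorem Conn.right (h : Conn G A u v) : v ∈ A := by
  cases h with
  | refl h => exact h
  | step _ _ h => exact h

theorem Conn.mono (h : Conn G A u v) (hs : A ⊆ B) : Conn G B u v := by
  induction h with
  | refl h => exact .refl (hs h)
  | step _ h1 h2 ih => exact .step ih h1 (hs h2)

theorem Conn.monoG {H : SimpleGraph V} (hGH : ∀ x y, G.Adj x y → H.Adj x y) (h : Conn G A u v) :
    Conn H A u v := by
  induction h with
  | refl h => exact .refl h
  | step _ h1 h2 ih => exact .step ih (hGH _ _ h1) h2

theorem Conn.trans (h : Conn G A u v) (h' : Conn G A v w) : Conn G A u w := by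
  induction h' with
  | refl _ => exact h
  | step _ h1 h2 ih => exact .step ih h1 h2

theorem Conn.edge (hu : u ∈ A) (hv : v ∈ A) (h : G.Adj u v) : Conn G A u v :=
  .step (.refl hu) h hv

theorem Conn.symm (h : Conn G A u v) : Conn G A v u := by
  induction h with
  | refl h => exact .refl h
  | step h0 h1 h2 ih => exact (Conn.edge h2 h0.right h1.symm).trans ih

theorem Conn.closed (h : Conn G A u v) (C : Set V) (hu : u ∈ C)
    (hC : ∀ x ∈ C, ∀ y ∈ A, G.Adj x y → y ∈ C) : v ∈ C := by
  induction h with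
  | refl h => exact hu
  | step h0 h1 h2 ih => exact hC _ ih _ h2 h1

theorem Conn.inter (h : Conn G A u v) (C : Set V) (hu : u ∈ C)
    (hC : ∀ x ∈ C, ∀ y ∈ A, G.Adj x y → y ∈ C) : Conn G (A ∩ C) u v := by
  induction h with
  | refl h => exact .refl ⟨h, hu⟩
  | step h0 h1 h2 ih => exact .step ih h1 ⟨h2, hC _ ih.right.2 _ h2 h1⟩

theorem Conn.diff (h : Conn G A u v) (hw : ¬ Conn G A u w) : Conn G (A \ {w}) u v := by
  induction h with
  | refl h => exact .refl ⟨h, by rintro rfl; exact hw (.refl h)⟩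
  | step h0 h1 h2 ih => exact .step ih h1 ⟨h2, by rintro rfl; exact hw (.step h0 h1 h2)⟩

theorem Conn.comp (h : Conn G A u v) : Conn G (cmp G A u) u v := by
  induction h with
  | refl h => exact .refl (.refl h)
  | step h0 h1 h2 ih => exact .step ih h1 (Conn.step h0 h1 h2)

theorem cmp_connd : Connd G (cmp G A u) := fun _ hx _ hy =>
  (Conn.comp hx).symm.trans (Conn.comp hy)

theorem cmp_sub : cmp G A u ⊆ A := fun _ h => Conn.right h

theorem cmp_closed (hx : x ∈ cmp G A u) (hy : y ∈ A) (h : G.Adj x y) : y ∈ cmp G A u :=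
  Conn.step hx h hy

/-- leaving a set -/
theorem Conn.exit (h : Conn G A u v) (C : Set V) (hu : u ∈ C) (hv : v ∉ C) :
    ∃ x ∈ C, ∃ y ∈ A, y ∉ C ∧ G.Adj x y ∧ Conn G (A ∩ C) u x := by
  induction h with
  | refl h => exact absurd hu hv
  | @step v' w h0 h1 h2 ih =>
    by_cases hv' : v' ∈ C
    · by_cases hc : Conn G (A ∩ C) u v'
      · exact ⟨v', hv', w, h2, hv, h1, hc⟩
      · by_contra hcon
        push Not at hcon
        apply hc
        clear ih h1 h2 hv
        have : ∀ z, Conn G A u z → Conn G (A ∩ C) u z := by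
          intro z hz
          induction hz with
          | refl h => exact .refl ⟨h, hu⟩
          | @step p q g0 g1 g2 ih =>
            refine .step ih g1 ⟨g2, ?_⟩
            by_contra hq
            exact hcon p ih.right.2 q g2 hq g1 ih
        exact this _ h0
    · exact ih hv'

theorem Connd.union (hA : Connd G A) (hB : Connd G B) (hx : x ∈ A) (hy : y ∈ B)
    (h : G.Adj x y) : Connd G (A ∪ B) := by
  have hxy : Conn G (A ∪ B) x y := Conn.edge (Or.inl hx) (Or.inr hy) h
  have key : ∀ u ∈ A ∪ B, Conn G (A ∪ B) x u := by
    rintro u (hu | hu)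
    · exact (hA x hx u hu).mono Set.subset_union_left
    · exact hxy.trans ((hB y hy u hu).mono Set.subset_union_right)
  exact fun u hu v hv => (key u hu).symm.trans (key v hv)

theorem R.left (h : R G A u v n) : u ∈ A := by
  cases h with
  | nil h => exact h
  | cons h _ _ => exact h

theorem R.right (h : R G A u v n) : v ∈ A := by
  induction h with
  | nil h => exact h
  | cons _ _ _ ih => exact ih.1

theorem R.mono (h : R G A u v n) : ∀ {B : Set V}, A ⊆ B → R G B u v n := by
  induction h with
  | nil h => exact fun hs => .nil (hs h)
  | cons h1 h2 _ ih => exact fun hs => .cons (hs h1) h2 (ih (Set.sdiff_subset_sdiff_left hs))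

theorem R.join (h : R G A u v n) : ∀ {B : Set V} {v' w : V} {m : ℕ}, G.Adj v v' → R G B v' w m →
    Disjoint A B → R G (A ∪ B) u w (n + m + 1) := by
  induction h with
  | @nil A u h =>
    intro B v' w m h1 h2 h3
    have h4 : u ∉ B := fun hb => Set.disjoint_left.1 h3 h hb
    have : R G (A ∪ B) u w (m + 1) := .cons (Or.inl h) h1 (h2.mono fun x hx =>
      ⟨Or.inr hx, by rintro rfl; exact h4 hx⟩)
    simpa using this
  | @cons A u v' w n h0 h1 h2 ih =>
    intro B v'' w m h3 h4 h5
    have h6 : u ∉ B := fun hb => Set.disjoint_left.1 h5 h0 hb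
    have := ih h3 h4 (h5.mono_left Set.sdiff_subset)
    have h7 : R G ((A ∪ B)) u w ((n + m + 1) + 1) := by
      refine .cons (Or.inl h0) h1 (this.mono ?_)
      rintro x (hx | hx)
      · exact ⟨Or.inl hx.1, hx.2⟩
      · exact ⟨Or.inr hx, by rintro rfl; exact h6 hx⟩
    have e : n + 1 + m + 1 = (n + m + 1) + 1 := by ring
    rw [e]; exact h7

theorem R.symm (h : R G A u v n) : R G A v u n := by
  induction h with
  | nil h => exact .nil h
  | @cons A u v w n h0 h1 h2 ih =>
    have := ih.join h1.symm (R.nil (G := G) (A := {u}) rfl) Set.disjoint_sdiff_left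
    refine this.mono ?_
    rintro x (hx | hx)
    · exact hx.1
    · rw [hx]; exact h0

theorem R.avoid (h : R G A v w n) : ∀ u, R G (A \ {u}) v w n ∨ ∃ m, R G A u w m := by
  induction h with
  | @nil A v h =>
    intro u
    by_cases e : v = u
    · subst e; exact Or.inr ⟨0, .nil h⟩
    · exact Or.inl (.nil ⟨h, e⟩)
  | @cons A v v' w n h0 h1 h2 ih =>
    intro u
    by_cases e : v = u
    · subst e; exact Or.inr ⟨_, .cons h0 h1 h2⟩
    · rcases ih u with h | ⟨m, h⟩
      · exact Or.inl (.cons ⟨h0, e⟩ h1 (h.mono fun x hx => ⟨⟨hx.1.1, hx.2⟩, hx.1.2⟩))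
      · exact Or.inr ⟨m, h.mono Set.sdiff_subset⟩

theorem Conn.exR (h : Conn G A u v) : ∃ n, R G A u v n := by
  have : ∃ n, R G A v u n := by
    induction h with
    | refl h => exact ⟨0, .nil h⟩
    | @step v w _ h1 h2 ih =>
      obtain ⟨n, hn⟩ := ih
      rcases hn.avoid w with h | h
      · exact ⟨_, .cons h2 h1.symm h⟩
      · exact h
  obtain ⟨n, hn⟩ := this
  exact ⟨n, hn.symm⟩

theorem R.conn (h : R G A u v n) : Conn G A u v := by
  induction h with
  | nil h => exact .refl h
  | cons h0 h1 h2 ih =>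
    exact (Conn.edge h0 h2.left.1 h1).trans (ih.mono Set.sdiff_subset)

theorem Reach.conn (h : Reach G A u v n) : Conn G A u v := by
  obtain ⟨m, _, h⟩ := h
  exact h.conn

theorem Conn.reach (h : Conn G A u v) : Reach G A u v 0 := by
  obtain ⟨n, hn⟩ := h.exR
  exact ⟨n, Nat.zero_le _, hn⟩

theorem Reach.mono (h : Reach G A u v n) (hs : A ⊆ B) : Reach G B u v n := by
  obtain ⟨m, h1, h⟩ := h
  exact ⟨m, h1, h.mono hs⟩

theorem Reach.le (h : Reach G A u v n) (hs : m ≤ n) : Reach G A u v m := by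
  obtain ⟨p, h1, h⟩ := h
  exact ⟨p, hs.trans h1, h⟩

theorem Reach.symm (h : Reach G A u v n) : Reach G A v u n := by
  obtain ⟨m, h1, h⟩ := h
  exact ⟨m, h1, h.symm⟩

theorem Reach.join {v' : V} (h : Reach G A u v n) (e : G.Adj v v') (h' : Reach G B v' w m)
    (hd : Disjoint A B) : Reach G (A ∪ B) u w (n + m + 1) := by
  obtain ⟨p, h1, h⟩ := h
  obtain ⟨q, h1', h'⟩ := h'
  exact ⟨_, by omega, h.join e h' hd⟩

theorem Reach.glue (h : Reach G A u v n) (h' : Reach G B v w m)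
    (hd : A ∩ B ⊆ {v}) : Reach G (A ∪ B) u w (n + m) := by
  obtain ⟨p, h1, h⟩ := h
  obtain ⟨q, h1', h'⟩ := h'
  cases h' with
  | nil hx => exact ⟨p, by omega, h.mono Set.subset_union_left⟩
  | cons h2 h3 h4 =>
    have hdd : Disjoint A (B \ {v}) := by
      rw [Set.disjoint_left]
      intro x hx hx'
      exact hx'.2 (hd ⟨hx, hx'.1⟩)
    exact ⟨_, by omega, (h.join h3 h4 hdd).mono
      (Set.union_subset_union_right _ Set.sdiff_subset)⟩

/-- drop the first vertex -/
theorem Reach.tail (h : Reach G A u v n) (hne : u ≠ v) :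
    ∃ u', G.Adj u u' ∧ Reach G (A \ {u}) u' v (n - 1) := by
  obtain ⟨m, h1, h⟩ := h
  cases h with
  | nil _ => exact absurd rfl hne
  | cons h2 h3 h4 => exact ⟨_, h3, _, by omega, h4⟩

theorem R.walk (h : R G A u v n) : ∃ p : G.Walk u v, p.IsPath ∧ p.length = n ∧ ∀ x ∈ p.support, x ∈ A := by
  induction h with
  | nil h => exact ⟨.nil, by simp, rfl, by simpa using h⟩
  | @cons A u v w n h0 h1 h2 ih =>
    obtain ⟨p, hp, hl, hs⟩ := ih
    refine ⟨.cons h1 p, ?_, by simp [hl], ?_⟩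
    · rw [SimpleGraph.Walk.cons_isPath_iff]
      exact ⟨hp, fun hu => (hs u hu).2 rfl⟩
    · intro x hx
      rw [SimpleGraph.Walk.support_cons, List.mem_cons] at hx
      rcases hx with rfl | hx
      · exact h0
      · exact (hs x hx).1

end basics
end SP

namespace SP

section menger
variable {V : Type*} {G : SimpleGraph V} {A B : Set V} {u v w x y z t : V}

theorem conn_del (h : Conn G A u t) (x y : V) :
    Conn (G.deleteEdges {s(x,y)}) A u t ∨
    (Conn (G.deleteEdges {s(x,y)}) A u x ∧ Conn (G.deleteEdges {s(x,y)}) A y t) ∨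
    (Conn (G.deleteEdges {s(x,y)}) A u y ∧ Conn (G.deleteEdges {s(x,y)}) A x t) := by
  induction h with
  | refl h => exact Or.inl (.refl h)
  | @step v w h0 h1 h2 ih =>
    by_cases e : s(v,w) = s(x,y)
    · rw [Sym2.eq_iff] at e
      rcases e with ⟨rfl, rfl⟩ | ⟨rfl, rfl⟩
      · rcases ih with ih | ih | ih
        · exact Or.inr (Or.inl ⟨ih, .refl h2⟩)
        · exact Or.inr (Or.inl ⟨ih.1, .refl h2⟩)
        · exact Or.inl ih.1
      · rcases ih with ih | ih | ih
        · exact Or.inr (Or.inr ⟨ih, .refl h2⟩)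
        · exact Or.inl ih.1
        · exact Or.inr (Or.inr ⟨ih.1, .refl h2⟩)
    · have h3 : (G.deleteEdges {s(x,y)}).Adj v w := by
        rw [SimpleGraph.deleteEdges_adj]; exact ⟨h1, by simpa using e⟩
      rcases ih with ih | ih | ih
      · exact Or.inl (.step ih h3 h2)
      · exact Or.inr (Or.inl ⟨ih.1, .step ih.2 h3 h2⟩)
      · exact Or.inr (Or.inr ⟨ih.1, .step ih.2 h3 h2⟩)

/-- trim a connection so that it ends at `w` and is otherwise connected away from `w` -/
theorem Conn.trim (h : Conn G A u w) : ∃ P ⊆ A, Conn G P u w ∧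
    ∀ z ∈ P, z ≠ w → Conn G (P \ {w}) u z := by
  by_cases e : u = w
  · subst e
    exact ⟨{u}, by simpa using h.left, .refl rfl, fun z hz hz' => absurd hz hz'⟩
  · obtain ⟨x, hx, y, hy, hyC, hadj, hc⟩ := h.exit ({w}ᶜ) (by simpa using e) (by simp)
    have hyw : y = w := by simpa using hyC
    subst hyw
    have hsub : cmp G (A \ {y}) u ⊆ (insert y (cmp G (A \ {y}) u)) \ {y} := by
      intro z hz
      exact ⟨Or.inr hz, (cmp_sub hz).2⟩
    have hc' : Conn G (A \ {y}) u x := hc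
    refine ⟨insert y (cmp G (A \ {y}) u), ?_, ?_, ?_⟩
    · rintro z (rfl | hz)
      · exact hy
      · exact (cmp_sub hz).1
    · refine .step (hc'.comp.mono (Set.subset_insert _ _)) hadj (Set.mem_insert _ _)
    · rintro z (rfl | hz) hne
      · exact absurd rfl hne
      · exact (Conn.comp hz).mono hsub

def Men (G : SimpleGraph V) (U T : Set V) : Prop :=
  ∃ A1 A2 : Set V, Disjoint A1 A2 ∧ ∃ u1 ∈ U, ∃ u2 ∈ U, ∃ t1 ∈ T, ∃ t2 ∈ T,
    Conn G A1 u1 t1 ∧ Conn G A2 u2 t2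

theorem men_aux {U T : Set V} (x y w : V) (h : ∀ w, ∃ u ∈ U, ∃ t ∈ T, Conn G {w}ᶜ u t)
    (hw : ∀ u ∈ U, ∀ t ∈ T, ¬ Conn (G.deleteEdges {s(x,y)}) {w}ᶜ u t)
    (t0 : V) (ht0 : t0 ∈ T) (hy : Conn (G.deleteEdges {s(x,y)}) {w}ᶜ y t0) (w' : V) :
    ∃ u ∈ U, ∃ t ∈ ({w, x} : Set V), Conn (G.deleteEdges {s(x,y)}) {w'}ᶜ u t := by
  by_contra hcon
  push Not at hcon
  obtain ⟨u, hu, t, ht, huv⟩ := h w'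
  have nw := hcon u hu w (by simp)
  have nx := hcon u hu x (by simp)
  have av : ∀ z, Conn (G.deleteEdges {s(x,y)}) {w'}ᶜ u z → Conn (G.deleteEdges {s(x,y)}) {w}ᶜ u z := by
    intro z hz
    exact (hz.diff nw).mono (fun p hp => hp.2)
  have ny : ¬ Conn (G.deleteEdges {s(x,y)}) {w'}ᶜ u y := fun hc =>
    hw u hu t0 ht0 ((av _ hc).trans hy)
  rcases conn_del huv x y with h1 | h1 | h1
  · exact hw u hu t ht (av _ h1)
  · exact nx h1.1
  · exact ny h1.1

theorem men_step {U T : Set V} (x y w : V) (hxy : G.Adj x y)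
    (IH : ∀ U T : Set V, (∀ w, ∃ u ∈ U, ∃ t ∈ T, Conn (G.deleteEdges {s(x,y)}) {w}ᶜ u t) →
      Men (G.deleteEdges {s(x,y)}) U T)
    (h : ∀ w, ∃ u ∈ U, ∃ t ∈ T, Conn G {w}ᶜ u t)
    (hw : ∀ u ∈ U, ∀ t ∈ T, ¬ Conn (G.deleteEdges {s(x,y)}) {w}ᶜ u t)
    (u0 t0 : V) (hu0 : u0 ∈ U) (ht0 : t0 ∈ T) (hx : Conn (G.deleteEdges {s(x,y)}) {w}ᶜ u0 x)
    (hy : Conn (G.deleteEdges {s(x,y)}) {w}ᶜ y t0) : Men G U T := by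
  have wx : x ≠ w := hx.right
  have wy : y ≠ w := hy.left
  have side : ∀ G' : SimpleGraph V, ∀ (U : Set V) (x : V), x ≠ w → Men G' U {w, x} → ∃ A1 A2 : Set V, Disjoint A1 A2 ∧
      ∃ u1 ∈ U, ∃ u2 ∈ U, Conn G' A1 u1 w ∧ Conn G' A2 u2 x ∧ ∀ z ∈ A1 ∪ A2, z ≠ w →
        ∃ u ∈ U, Conn G' {w}ᶜ u z := by
    intro G' U x wx hm
    have hm' : ∃ A1 A2 : Set V, Disjoint A1 A2 ∧ ∃ u1 ∈ U, ∃ u2 ∈ U, Conn G' A1 u1 w ∧ Conn G' A2 u2 x := by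
      obtain ⟨A1, A2, hd, u1, hu1, u2, hu2, t1, ht1, t2, ht2, c1, c2⟩ := hm
      rcases ht1 with rfl | rfl <;> rcases ht2 with rfl | rfl
      · exact absurd c2.right (Set.disjoint_left.1 hd c1.right)
      · exact ⟨A1, A2, hd, u1, hu1, u2, hu2, c1, c2⟩
      · exact ⟨A2, A1, hd.symm, u2, hu2, u1, hu1, c2, c1⟩
      · exact absurd c2.right (Set.disjoint_left.1 hd c1.right)
    obtain ⟨A1, A2, hd, u1, hu1, u2, hu2, c1, c2⟩ := hm'
    obtain ⟨P, hP, cP, hPz⟩ := c1.trim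
    obtain ⟨Q, hQ, cQ, hQz⟩ := c2.trim
    refine ⟨P, Q, hd.mono hP hQ, u1, hu1, u2, hu2, cP, cQ, ?_⟩
    have hwQ : w ∉ Q := fun hh => Set.disjoint_left.1 hd c1.right (hQ hh)
    rintro z (hz | hz) hne
    · exact ⟨u1, hu1, (hPz z hz hne).mono fun p hp => hp.2⟩
    · refine ⟨u2, hu2, ?_⟩
      have : Conn G' Q u2 z := by
        by_cases e : z = x
        · subst e; exact cQ
        · exact (hQz z hz e).mono Set.sdiff_subset
      exact this.mono fun p hp => by rintro rfl; exact hwQ hp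
  obtain ⟨P1, P2, hdP, p1, hp1, p2, hp2, cp1, cp2, hPz⟩ :=
    side _ U x wx (IH U {w, x} (men_aux x y w h hw t0 ht0 hy))
  have hsw : s(x,y) = s(y,x) := Sym2.eq_swap
  have hq : Men (G.deleteEdges {s(x,y)}) T {w, y} := by
    refine IH T {w, y} ?_
    have := men_aux (G := G) (U := T) (T := U) y x w (fun w => by
      obtain ⟨u, hu, t, ht, hc⟩ := h w
      exact ⟨t, ht, u, hu, hc.symm⟩) (by
      intro u hu t ht hc
      rw [← hsw] at hc
      exact hw t ht u hu hc.symm) u0 hu0 (by rw [← hsw]; exact hx.symm)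
    rw [← hsw] at this
    exact this
  obtain ⟨Q1, Q2, hdQ, q1, hq1, q2, hq2, cq1, cq2, hQz⟩ := side _ T y wy hq
  have meet : ∀ z, z ∈ P1 ∪ P2 → z ∈ Q1 ∪ Q2 → z = w := by
    intro z hz hz'
    by_contra hne
    obtain ⟨u, hu, hc⟩ := hPz z hz hne
    obtain ⟨t, ht, hc'⟩ := hQz z hz' hne
    exact hw u hu t ht (hc.trans hc'.symm)
  have mG : ∀ p q, (G.deleteEdges {s(x,y)}).Adj p q → G.Adj p q := fun p q h => h.1
  have wP2 : w ∉ P2 := fun hh => Set.disjoint_left.1 hdP cp1.right hh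
  have wQ2 : w ∉ Q2 := fun hh => Set.disjoint_left.1 hdQ cq1.right hh
  refine ⟨P1 ∪ Q1, P2 ∪ Q2, ?_, p1, hp1, p2, hp2, q1, hq1, q2, hq2, ?_, ?_⟩
  · rw [Set.disjoint_left]
    rintro z (hz | hz) (hz' | hz')
    · exact Set.disjoint_left.1 hdP hz hz'
    · exact wQ2 ((meet z (Or.inl hz) (Or.inr hz')) ▸ hz')
    · exact wP2 ((meet z (Or.inr hz') (Or.inl hz)) ▸ hz')
    · exact Set.disjoint_left.1 hdQ hz hz'
  · exact ((cp1.monoG mG).mono Set.subset_union_left).trans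
      ((cq1.symm.monoG mG).mono Set.subset_union_right)
  · exact (Conn.step ((cp2.monoG mG).mono Set.subset_union_left) hxy (Or.inr cq2.right)).trans
      ((cq2.symm.monoG mG).mono Set.subset_union_right)

theorem menger2 [Finite V] [Nonempty V] : ∀ (n : ℕ) (G : SimpleGraph V), G.edgeSet.ncard = n → ∀ (U T : Set V),
    (∀ w, ∃ u ∈ U, ∃ t ∈ T, Conn G {w}ᶜ u t) → Men G U T := by
  intro n
  induction n using Nat.strong_induction_on with
  | _ n ih =>
  intro G hn U T h
  by_cases hE : ∃ x y, G.Adj x y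
  · obtain ⟨x, y, hxy⟩ := hE
    have hlt : (G.deleteEdges {s(x,y)}).edgeSet.ncard < n := by
      rw [← hn]
      refine Set.ncard_lt_ncard ?_ (Set.toFinite _)
      rw [SimpleGraph.edgeSet_deleteEdges]
      refine ⟨Set.sdiff_subset, fun hs => ?_⟩
      exact (hs (show s(x,y) ∈ G.edgeSet from hxy)).2 rfl
    have IH := ih _ hlt _ rfl
    have mG : ∀ p q, (G.deleteEdges {s(x,y)}).Adj p q → G.Adj p q := fun p q h => h.1
    by_cases hk : ∀ w, ∃ u ∈ U, ∃ t ∈ T, Conn (G.deleteEdges {s(x,y)}) {w}ᶜ u t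
    · obtain ⟨A1, A2, hd, u1, hu1, u2, hu2, t1, ht1, t2, ht2, c1, c2⟩ := IH U T hk
      exact ⟨A1, A2, hd, u1, hu1, u2, hu2, t1, ht1, t2, ht2, c1.monoG mG, c2.monoG mG⟩
    · push Not at hk
      obtain ⟨w, hw⟩ := hk
      obtain ⟨u, hu, t, ht, hc⟩ := h w
      rcases conn_del hc x y with h1 | h1 | h1
      · exact absurd h1 (hw u hu t ht)
      · exact men_step x y w hxy IH h hw u t hu ht h1.1 h1.2
      · have hsw : s(x,y) = s(y,x) := Sym2.eq_swap
        rw [hsw] at IH hw h1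
        exact men_step y x w hxy.symm IH h hw u t hu ht h1.1 h1.2
  · push Not at hE
    have triv : ∀ A u t, Conn G A u t → u = t := by
      intro A u t hc
      cases hc with
      | refl _ => rfl
      | step _ h _ => exact absurd h (hE _ _)
    obtain ⟨w0⟩ := ‹Nonempty V›
    obtain ⟨u, hu, t, ht, hc⟩ := h w0
    have e := triv _ _ _ hc
    subst e
    obtain ⟨u', hu', t', ht', hc'⟩ := h u
    have e := triv _ _ _ hc'
    subst e
    have : u' ≠ u := hc'.left
    exact ⟨{u}, {u'}, by simpa using this.symm, u, hu, u', hu', u, ht, u', ht', .refl rfl, .refl rfl⟩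

end menger
end SP

namespace SP

section link
variable {V : Type*} {G : SimpleGraph V} {A B : Set V} {u v w x y z t : V}

def aux (G : SimpleGraph V) (A : Set V) (S : Bool × Bool → Set V) : SimpleGraph (V ⊕ (Bool × Bool)) where
  Adj p q := match p, q with
    | .inl x, .inl y => G.Adj x y ∧ x ∈ A ∧ y ∈ A
    | .inl x, .inr i => x ∈ A ∧ x ∈ S i
    | .inr i, .inl x => x ∈ A ∧ x ∈ S i
    | .inr _, .inr _ => False
  symm := ⟨by
    rintro (x | i) (y | j) h
    · exact ⟨h.1.symm, h.2.2, h.2.1⟩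
    · exact h
    · exact h
    · exact h⟩
  loopless := ⟨by
    rintro (x | i) h
    · exact G.loopless.irrefl x h.1
    · exact h⟩

theorem aux_lift {S : Bool × Bool → Set V} (h : Conn G B u v) (hB : B ⊆ A) (C : Set (V ⊕ (Bool × Bool)))
    (hBC : ∀ x ∈ B, Sum.inl x ∈ C) (p q : Bool × Bool) (hp : .inr p ∈ C) (hq : .inr q ∈ C)
    (hu : u ∈ S p) (hv : v ∈ S q) : Conn (aux G A S) C (.inr p) (.inr q) := by
  have h0 : Conn (aux G A S) C (.inl u) (.inl v) := by
    clear hv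
    induction h with
    | refl h => exact .refl (hBC _ h)
    | step h0 h1 h2 ih => exact .step ih ⟨h1, hB h0.right, hB h2⟩ (hBC _ h2)
  have h1 : Conn (aux G A S) C (.inr p) (.inl u) := Conn.edge hp (hBC _ h.left) ⟨hB h.left, hu⟩
  exact .step (h1.trans h0) ⟨hB h.right, hv⟩ hq

theorem aux_proj {S : Bool × Bool → Set V} (C : Set (V ⊕ (Bool × Bool))) (p q : Bool × Bool) (hpq : p ≠ q)
    (hC : ∀ i, Sum.inr i ∈ C → i = p ∨ i = q)
    (h : Conn (aux G A S) C (.inr p) (.inr q)) :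
    ∃ u ∈ S p, ∃ v ∈ S q, Conn G (A ∩ {x | Sum.inl x ∈ C}) u v := by
  obtain ⟨x, hx, y, hy, hyC, hadj, hc⟩ := h.exit ({Sum.inr q}ᶜ) (by simpa using hpq) (by simp)
  have hyw : y = Sum.inr q := by simpa using hyC
  subst hyw
  have key : ∀ z, Conn (aux G A S) (C ∩ {Sum.inr q}ᶜ) (.inr p) z → z = .inr p ∨
      ∃ x u, z = .inl x ∧ u ∈ S p ∧ Conn G (A ∩ {x | Sum.inl x ∈ C}) u x := by
    intro z hz
    induction hz with
    | refl _ => exact Or.inl rfl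
    | @step z z' h0 h1 h2 ih =>
      rcases z' with x' | i
      · right
        rcases ih with rfl | ⟨x0, u, rfl, hu, hc⟩
        · exact ⟨x', x', rfl, h1.2, .refl ⟨h1.1, h2.1⟩⟩
        · exact ⟨x', u, rfl, hu, .step hc h1.1 ⟨h1.2.2, h2.1⟩⟩
      · left
        rcases hC i h2.1 with rfl | rfl
        · rfl
        · exact absurd rfl h2.2
  rcases key x hc with rfl | ⟨x0, u, rfl, hu, hc⟩
  · exact absurd hadj (fun h => h)
  · exact ⟨u, hu, x0, hadj.2, hc⟩

theorem link [Finite V] (A U1 U2 V1 V2 : Set V)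
    (h1 : ∃ u ∈ U1, ∃ v ∈ V1 ∪ V2, Conn G A u v)
    (h2 : ∃ u ∈ U2, ∃ v ∈ V1 ∪ V2, Conn G A u v)
    (h3 : ∃ u ∈ U1 ∪ U2, ∃ v ∈ V1, Conn G A u v)
    (h4 : ∃ u ∈ U1 ∪ U2, ∃ v ∈ V2, Conn G A u v)
    (hw : ∀ w, ∃ u ∈ U1 ∪ U2, ∃ v ∈ V1 ∪ V2, Conn G (A \ {w}) u v) :
    ∃ A1 A2 : Set V, Disjoint A1 A2 ∧ A1 ⊆ A ∧ A2 ⊆ A ∧ ∃ u1 ∈ U1, ∃ u2 ∈ U2, ∃ v1 ∈ V1, ∃ v2 ∈ V2,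
      (Conn G A1 u1 v1 ∧ Conn G A2 u2 v2) ∨ (Conn G A1 u1 v2 ∧ Conn G A2 u2 v1) := by
  classical
  let S : Bool × Bool → Set V := fun p => match p with
    | (false, false) => U1
    | (false, true) => U2
    | (true, false) => V1
    | (true, true) => V2
  have hm : Men (aux G A S) {z | ∃ i, z = .inr (false, i)} {z | ∃ i, z = .inr (true, i)} := by
    refine menger2 _ _ rfl _ _ ?_
    have lift : ∀ (W : Set V) (w : V ⊕ (Bool × Bool)) (p q : Bool) (u v : V), u ∈ S (false, p) → v ∈ S (true, q) →
        Conn G W u v → W ⊆ A → (∀ x ∈ W, Sum.inl x ≠ w) → .inr (false, p) ≠ w → .inr (true, q) ≠ w →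
        ∃ u ∈ {z : V ⊕ (Bool × Bool) | ∃ i, z = .inr (false, i)}, ∃ t ∈ {z : V ⊕ (Bool × Bool)| ∃ i, z = .inr (true, i)},
          Conn (aux G A S) {w}ᶜ u t := by
      intro W w p q u v hu hv hc hW hx hp hq
      exact ⟨_, ⟨p, rfl⟩, _, ⟨q, rfl⟩, aux_lift hc hW _ hx _ _ hp hq hu hv⟩
    rintro (w | ⟨i, j⟩)
    · obtain ⟨u, hu, v, hv, hc⟩ := hw w
      have hx : ∀ x ∈ A \ {w}, (Sum.inl x : V ⊕ (Bool × Bool)) ≠ Sum.inl w := by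
        intro x hx he
        exact hx.2 (Sum.inl.inj he)
      rcases hu with hu | hu <;> rcases hv with hv | hv
      · exact lift _ _ false false u v hu hv hc Set.sdiff_subset hx (by simp) (by simp)
      · exact lift _ _ false true u v hu hv hc Set.sdiff_subset hx (by simp) (by simp)
      · exact lift _ _ true false u v hu hv hc Set.sdiff_subset hx (by simp) (by simp)
      · exact lift _ _ true true u v hu hv hc Set.sdiff_subset hx (by simp) (by simp)
    · rcases i with _ | _ <;> rcases j with _ | _
      · obtain ⟨u, hu, v, hv | hv, hc⟩ := h2
        · exact lift _ _ true false u v hu hv hc subset_rfl (by simp) (by simp) (by simp)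
        · exact lift _ _ true true u v hu hv hc subset_rfl (by simp) (by simp) (by simp)
      · obtain ⟨u, hu, v, hv | hv, hc⟩ := h1
        · exact lift _ _ false false u v hu hv hc subset_rfl (by simp) (by simp) (by simp)
        · exact lift _ _ false true u v hu hv hc subset_rfl (by simp) (by simp) (by simp)
      · obtain ⟨u, hu | hu, v, hv, hc⟩ := h4
        · exact lift _ _ false true u v hu hv hc subset_rfl (by simp) (by simp) (by simp)
        · exact lift _ _ true true u v hu hv hc subset_rfl (by simp) (by simp) (by simp)
      · obtain ⟨u, hu | hu, v, hv, hc⟩ := h3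
        · exact lift _ _ false false u v hu hv hc subset_rfl (by simp) (by simp) (by simp)
        · exact lift _ _ true false u v hu hv hc subset_rfl (by simp) (by simp) (by simp)
  obtain ⟨A1, A2, hd, _, ⟨i1, rfl⟩, _, ⟨i2, rfl⟩, _, ⟨j1, rfl⟩, _, ⟨j2, rfl⟩, c1, c2⟩ := hm
  have ai1 := c1.left
  have ai2 := c2.left
  have aj1 := c1.right
  have aj2 := c2.right
  have hd1 : ∀ z, z ∈ A1 → z ∉ A2 := fun z hz => Set.disjoint_left.1 hd hz
  have hi : i1 ≠ i2 := by rintro rfl; exact hd1 _ ai1 ai2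
  have hj : j1 ≠ j2 := by rintro rfl; exact hd1 _ aj1 aj2
  have p1 := aux_proj A1 (false, i1) (true, j1) (by simp) (by
    rintro ⟨s, i⟩ hi'
    have h1 := hd1 _ hi'
    cases s
    · left
      have : i ≠ i2 := by rintro rfl; exact h1 ai2
      congr 1
      revert hi this; cases i <;> cases i1 <;> cases i2 <;> simp
    · right
      have : i ≠ j2 := by rintro rfl; exact h1 aj2
      congr 1
      revert hj this; cases i <;> cases j1 <;> cases j2 <;> simp) c1
  have p2 := aux_proj A2 (false, i2) (true, j2) (by simp) (by
    rintro ⟨s, i⟩ hi'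
    have h1 := fun h => hd1 _ h hi'
    cases s
    · left
      have : i ≠ i1 := by rintro rfl; exact h1 ai1
      congr 1
      revert hi this; cases i <;> cases i1 <;> cases i2 <;> simp
    · right
      have : i ≠ j1 := by rintro rfl; exact h1 aj1
      congr 1
      revert hj this; cases i <;> cases j1 <;> cases j2 <;> simp) c2
  obtain ⟨u1, hu1, v1, hv1, d1⟩ := p1
  obtain ⟨u2, hu2, v2, hv2, d2⟩ := p2
  have dd : Disjoint (A ∩ {x | Sum.inl x ∈ A1}) (A ∩ {x | Sum.inl x ∈ A2}) := by
    rw [Set.disjoint_left]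
    rintro x hx hx'
    exact hd1 _ hx.2 hx'.2
  cases i1 <;> cases i2 <;> cases j1 <;> cases j2 <;> try (exact absurd rfl hi) <;> try (exact absurd rfl hj)
  · exact absurd rfl hj
  · exact ⟨_, _, dd, Set.inter_subset_left, Set.inter_subset_left, u1, hu1, u2, hu2, v1, hv1, v2, hv2, Or.inl ⟨d1, d2⟩⟩
  · exact ⟨_, _, dd, Set.inter_subset_left, Set.inter_subset_left, u1, hu1, u2, hu2, v2, hv2, v1, hv1, Or.inr ⟨d1, d2⟩⟩
  · exact absurd rfl hj
  · exact absurd rfl hj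
  · exact ⟨_, _, dd.symm, Set.inter_subset_left, Set.inter_subset_left, u2, hu2, u1, hu1, v1, hv1, v2, hv2, Or.inr ⟨d2, d1⟩⟩
  · exact ⟨_, _, dd.symm, Set.inter_subset_left, Set.inter_subset_left, u2, hu2, u1, hu1, v2, hv2, v1, hv1, Or.inl ⟨d2, d1⟩⟩
  · exact absurd rfl hj

end link
end SP

namespace SP

section exit
variable {V : Type*} {G : SimpleGraph V} {A B W X Y Z : Set V} {a b u v w x y z t s : V} {D L : ℕ}

def IHat (G : SimpleGraph V) (W : Set V) (D L : ℕ) : Prop :=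
  ∀ W' ⊆ W, W' ≠ W → ∀ s ∈ W', ∀ u ∈ W', s ≠ u → Cut G W' s u → (∃ x ∈ W', x ≠ s ∧ x ≠ u) →
    (∀ v ∈ W', v ≠ s → v ≠ u → D ≤ (G.neighborSet v ∩ W').ncard) → Reach G W' s u (L + 2)

structure Leaf (G : SimpleGraph V) (X : Set V) (s : V) (Z : Set V) (L : ℕ) : Prop where
  sub : Z ⊆ X
  sX : s ∈ X
  sZ : s ∉ Z
  ne : Z.Nonempty
  cl : ∀ z ∈ Z, ∀ v ∈ X, G.Adj z v → v ∈ Z ∨ v = s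
  conn : Connd G Z
  lens : ∀ u ∈ Z, ∃ c ∈ Z, G.Adj s c ∧ Reach G Z c u L

theorem leaf_rest (hX : Connd G X) (sX : s ∈ X) (sZ : s ∉ Z)
    (cl : ∀ z ∈ Z, ∀ v ∈ X, G.Adj z v → v ∈ Z ∨ v = s) : Connd G (X \ Z) := by
  have key : ∀ v ∈ X \ Z, Conn G (X \ Z) v s := by
    intro v hv
    by_contra hs
    have := (hX v hv.1 s sX).closed (cmp G (X \ Z) v) (Conn.refl hv) (by
      intro p hp q hq hpq
      refine cmp_closed hp ⟨hq, fun hqZ => ?_⟩ hpq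
      rcases cl q hqZ p (cmp_sub hp).1 hpq.symm with h | h
      · exact (cmp_sub hp).2 h
      · subst h; exact hs hp)
    exact hs this
  exact fun u hu v hv => (key u hu).trans (key v hv).symm

theorem exit_aux [Finite V] (X : Set V) : ∀ (n : ℕ) (s : V) (Z : Set V), Z.ncard = n → Z ⊆ X → s ∈ X → s ∉ Z →
    Z.Nonempty → (∀ z ∈ Z, ∀ v ∈ X, G.Adj z v → v ∈ Z ∨ v = s) →
    ∃ s' Z', Z' ⊆ Z ∧ (s' ∈ Z ∨ s' = s) ∧ s' ∈ X ∧ s' ∉ Z' ∧ Z'.Nonempty ∧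
      (∀ z ∈ Z', ∀ v ∈ X, G.Adj z v → v ∈ Z' ∨ v = s') ∧ Connd G Z' ∧
      ∀ u ∈ Z', Cut G (insert s' Z') s' u := by
  intro n
  induction n using Nat.strong_induction_on with
  | _ n ih =>
  intro s Z hn hZX hsX hsZ hne cl
  have red : ∀ (s1 : V) (Z1 : Set V), Z1 ⊆ Z → Z1 ≠ Z → (s1 ∈ Z ∨ s1 = s) → s1 ∉ Z1 → Z1.Nonempty →
    (∀ z ∈ Z1, ∀ v ∈ X, G.Adj z v → v ∈ Z1 ∨ v = s1) → 
    ∃ s' Z', Z' ⊆ Z ∧ (s' ∈ Z ∨ s' = s) ∧ s' ∈ X ∧ s' ∉ Z' ∧ Z'.Nonempty ∧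
      (∀ z ∈ Z', ∀ v ∈ X, G.Adj z v → v ∈ Z' ∨ v = s') ∧ Connd G Z' ∧
      ∀ u ∈ Z', Cut G (insert s' Z') s' u := by
    intro s1 Z1 h1 h2 h3 h4 h5 h6
    have hlt : Z1.ncard < n := by
      rw [← hn]; exact Set.ncard_lt_ncard (h1.ssubset_of_ne h2) (Set.toFinite _)
    have hs1 : s1 ∈ X := by
      rcases h3 with h | h
      · exact hZX h
      · rw [h]; exact hsX
    obtain ⟨s', Z', g1, g2, g3⟩ := ih _ hlt s1 Z1 rfl (h1.trans hZX) hs1 h4 h5 h6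
    refine ⟨s', Z', g1.trans h1, ?_, g3⟩
    rcases g2 with g | g
    · exact Or.inl (h1 g)
    · rw [g]; exact h3
  by_cases hconn : Connd G Z
  · by_cases hcut : ∀ u ∈ Z, Cut G (insert s Z) s u
    · exact ⟨s, Z, subset_rfl, Or.inr rfl, hsX, hsZ, hne, cl, hconn, hcut⟩
    · unfold Cut at hcut
      push Not at hcut
      obtain ⟨u, hu, w, v, hv, hvw, hno⟩ := hcut
      set C := cmp G (insert s Z \ {w}) v with hC
      have hsC : s ∉ C := fun h => hno s (Or.inl rfl) h
      have huC : u ∉ C := fun h => hno u (Or.inr rfl) h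
      have hCZ : C ⊆ Z := by
        intro z hz
        rcases (cmp_sub hz).1 with rfl | h
        · exact absurd hz hsC
        · exact h
      have hCne : C.Nonempty := ⟨v, Conn.refl ⟨hv, hvw⟩⟩
      have hCZ' : C ≠ Z := by rintro h; rw [h] at huC; exact huC hu
      by_cases hwZ : w ∈ Z
      · refine red w C hCZ hCZ' (Or.inl hwZ) (fun h => (cmp_sub h).2 rfl) hCne ?_
        intro z hz q hq hzq
        by_cases hqw : q = w
        · exact Or.inr hqw
        · left
          refine cmp_closed hz ⟨?_, hqw⟩ hzq
          rcases cl z (hCZ hz) q hq hzq with h | h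
          · exact Or.inr h
          · exact Or.inl h
      · refine red s C hCZ hCZ' (Or.inr rfl) hsC hCne ?_
        intro z hz q hq hzq
        rcases cl z (hCZ hz) q hq hzq with h | h
        · left
          refine cmp_closed hz ⟨Or.inr h, ?_⟩ hzq
          rintro rfl; exact hwZ h
        · exact Or.inr h
  · unfold Connd at hconn
    push Not at hconn
    obtain ⟨u, hu, v, hv, huv⟩ := hconn
    refine red s (cmp G Z u) cmp_sub (fun h => ?_) (Or.inr rfl) (fun h => hsZ (cmp_sub h)) ⟨u, .refl hu⟩ ?_
    · rw [← h] at hv; exact huv hv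
    · intro z hz q hq hzq
      rcases cl z (cmp_sub hz) q hq hzq with h | h
      · exact Or.inl (cmp_closed hz h hzq)
      · exact Or.inr h

theorem exists_leaf [Finite V] (hIH : IHat G W D L) (hD : 1 ≤ D) (hL : D ≤ 1 → L = 0)
    (hXW : X ⊆ W) (haX : ∃ a ∈ W, a ∉ X) (hdeg : ∀ v ∈ X, D ≤ (G.neighborSet v ∩ X).ncard)
    (s : V) (Z : Set V) (hZX : Z ⊆ X) (hsX : s ∈ X) (hsZ : s ∉ Z) (hne : Z.Nonempty)
    (cl : ∀ z ∈ Z, ∀ v ∈ X, G.Adj z v → v ∈ Z ∨ v = s) :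
    ∃ s' Z', Z' ⊆ Z ∧ (s' ∈ Z ∨ s' = s) ∧ Leaf G X s' Z' L := by
  obtain ⟨s', Z', h1, h2, h3, h4, h5, h6, h7, h8⟩ := exit_aux X _ s Z rfl hZX hsX hsZ hne cl
  refine ⟨s', Z', h1, h2, ⟨h1.trans hZX, h3, h4, h5, h6, h7, ?_⟩⟩
  intro u hu
  have hsub : insert s' Z' ⊆ X := Set.insert_subset h3 (h1.trans hZX)
  have hdeg' : ∀ v ∈ Z', D ≤ (G.neighborSet v ∩ insert s' Z').ncard := by
    intro v hv
    refine (hdeg v (hZX (h1 hv))).trans (Set.ncard_le_ncard ?_ (Set.toFinite _))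
    rintro q ⟨hq, hqX⟩
    refine ⟨hq, ?_⟩
    rcases h6 v hv q hqX hq with h | h
    · exact Or.inr h
    · exact Or.inl h
  have hus : s' ≠ u := by rintro rfl; exact h4 hu
  by_cases h3' : ∃ x ∈ Z', x ≠ u
  · obtain ⟨x, hx, hxu⟩ := h3'
    have hW : insert s' Z' ≠ W := by
      rintro rfl
      obtain ⟨a, ha, ha'⟩ := haX
      exact ha' (hsub ha)
    have := hIH (insert s' Z') (hsub.trans hXW) hW s' (Or.inl rfl) u (Or.inr hu) hus (h8 u hu)
      ⟨x, Or.inr hx, by rintro rfl; exact h4 hx, hxu⟩ (by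
        rintro v (rfl | hv) hvs _
        · exact absurd rfl hvs
        · exact hdeg' v hv)
    obtain ⟨c, hc, hr⟩ := this.tail hus
    have e : insert s' Z' \ {s'} = Z' := by
      ext q; constructor
      · rintro ⟨rfl | h, h'⟩
        · exact absurd rfl h'
        · exact h
      · intro h; exact ⟨Or.inr h, by rintro rfl; exact h4 h⟩
    rw [e] at hr
    exact ⟨c, hr.conn.left, hc, hr.le (by omega)⟩
  · push Not at h3'
    have hsub1 : G.neighborSet u ∩ insert s' Z' ⊆ {s'} := by
      rintro q ⟨hq, rfl | hq'⟩
      · rfl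
      · rw [h3' q hq'] at hq; exact absurd hq (G.loopless.irrefl u)
    have hc := hdeg' u hu
    have hle := Set.ncard_le_ncard hsub1 (Set.toFinite _)
    rw [Set.ncard_singleton] at hle
    have hL0 := hL (hc.trans hle)
    have hne' : (G.neighborSet u ∩ insert s' Z').Nonempty := by
      rw [← Set.ncard_pos (Set.toFinite _)]; omega
    obtain ⟨q, hq⟩ := hne'
    have hqs : q = s' := hsub1 hq
    subst hqs
    refine ⟨u, hu, (show G.Adj u q from hq.1).symm, ?_⟩
    rw [hL0]
    exact ⟨0, le_rfl, .nil hu⟩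

end exit
end SP

namespace SP

section side
variable {V : Type*} {G : SimpleGraph V} {P Ai Aj Ak U : Set V} {u v w x y z t s r : V}

theorem Conn.rest {X Z : Set V} (h : Conn G X u v) (hu : u ∉ Z) (hv : v ∉ Z)
    (cl : ∀ z ∈ Z, ∀ v ∈ X, G.Adj z v → v ∈ Z ∨ v = s) : Conn G (X \ Z) u v := by
  have := h.closed ({p | Conn G (X \ Z) u p} ∪ {p | p ∈ Z ∧ Conn G (X \ Z) u s})
    (Or.inl (.refl ⟨h.left, hu⟩)) (by
      rintro p (hp | hp) q hq hpq
      · by_cases hqZ : q ∈ Z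
        · rcases cl q hqZ p hp.right.1 hpq.symm with h | h
          · exact absurd h hp.right.2
          · subst h; exact Or.inr ⟨hqZ, hp⟩
        · exact Or.inl (Conn.step hp hpq ⟨hq, hqZ⟩)
      · rcases cl p hp.1 q hq hpq with h | h
        · exact Or.inr ⟨h, hp.2⟩
        · subst h; exact Or.inl hp.2)
  rcases this with h | h
  · exact h
  · exact absurd h.1 hv

def Pair (G : SimpleGraph V) (P Ai Aj Ak : Set V) (r : V) : Prop :=
  ∃ B1 B2 : Set V, Disjoint B1 B2 ∧ B1 ⊆ P ∧ B2 ⊆ P ∧ ∃ xi ∈ Ai, ∃ xj ∈ Aj, ∃ xk ∈ Ak,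
    Conn G B1 xi r ∧ Conn G B2 xj xk

theorem Pair.swap (h : Pair G P Ai Aj Ak r) : Pair G P Ai Ak Aj r := by
  obtain ⟨B1, B2, hd, h1, h2, xi, hi, xj, hj, xk, hk, c1, c2⟩ := h
  exact ⟨B1, B2, hd, h1, h2, xi, hi, xk, hk, xj, hj, c1, c2.symm⟩

def Far (G : SimpleGraph V) (P Aj Ak : Set V) (w : V) : Set V :=
  {v | ∃ x ∈ Aj ∪ Ak, Conn G (P \ {w}) v x}

def Clean (G : SimpleGraph V) (P U : Set V) : Prop :=
  ∀ w, ∀ v ∈ P, v ≠ w → ∃ x ∈ U, Conn G (P \ {w}) v x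

theorem far_sub (h : v ∈ Far G P Aj Ak w) : v ∈ P ∧ v ≠ w := by
  obtain ⟨x, hx, hc⟩ := h
  exact hc.left

theorem far_step (h : v ∈ Far G P Aj Ak w) (hu : u ∈ P) (huw : u ≠ w) (e : G.Adj v u) :
    u ∈ Far G P Aj Ak w := by
  obtain ⟨x, hx, hc⟩ := h
  have hu' : u ∈ P \ {w} := ⟨hu, huw⟩
  exact ⟨x, hx, (Conn.edge hu' hc.left e.symm).trans hc⟩

theorem far_mem (hP : x ∈ P) (hx : x ∈ Aj ∪ Ak) (hw : x ≠ w) : x ∈ Far G P Aj Ak w := by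
  refine ⟨x, hx, Conn.refl ?_⟩
  exact ⟨hP, hw⟩

theorem side_a [Finite V] (hP : Connd G P) (hi : (Ai ∩ P).Nonempty) (hj : (Aj ∩ P).Nonempty) (hk : (Ak ∩ P).Nonempty)
    (hr : r ∈ P) : Pair G P Aj Ai Ak r ∨ Pair G P Ak Ai Aj r ∨
      ∃ w ∈ P, r ∉ Far G P Aj Ak w ∧ ∀ x ∈ Ai, x ∉ Far G P Aj Ak w := by
  obtain ⟨xi, hi, hi'⟩ := hi
  obtain ⟨xj, hj, hj'⟩ := hj
  obtain ⟨xk, hk, hk'⟩ := hk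
  by_cases hw : ∀ w, ∃ u ∈ {r} ∪ Ai, ∃ v ∈ Aj ∪ Ak, Conn G (P \ {w}) u v
  · obtain ⟨A1, A2, hd, s1, s2, u1, hu1, u2, hu2, v1, hv1, v2, hv2, h⟩ := link P {r} Ai Aj Ak
      ⟨r, rfl, xj, Or.inl hj, hP _ hr _ hj'⟩ ⟨xi, hi, xj, Or.inl hj, hP _ hi' _ hj'⟩
      ⟨r, Or.inl rfl, xj, hj, hP _ hr _ hj'⟩ ⟨r, Or.inl rfl, xk, hk, hP _ hr _ hk'⟩ hw
    have : u1 = r := hu1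
    subst this
    rcases h with ⟨c1, c2⟩ | ⟨c1, c2⟩
    · exact Or.inl ⟨A1, A2, hd, s1, s2, v1, hv1, u2, hu2, v2, hv2, c1.symm, c2⟩
    · exact Or.inr (Or.inl ⟨A1, A2, hd, s1, s2, v2, hv2, u2, hu2, v1, hv1, c1.symm, c2⟩)
  · right; right
    push Not at hw
    obtain ⟨w, hw⟩ := hw
    refine ⟨w, ?_, ?_, ?_⟩
    · by_contra hwP
      rw [Set.sdiff_singleton_eq_self hwP] at hw
      exact hw r (Or.inl rfl) xj (Or.inl hj) (hP _ hr _ hj')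
    · rintro ⟨x, hx, hc⟩
      exact hw r (Or.inl rfl) x hx hc
    · rintro y hy ⟨x, hx, hc⟩
      exact hw y (Or.inr hy) x hx hc

theorem side_b (hP : Connd G P) (hj : (Aj ∩ P).Nonempty) (hk : (Ak ∩ P).Nonempty)
    (hc : Clean G P U) (hU : U ⊆ Ai ∪ (Aj ∪ Ak)) (hw : w ∈ P) (hr : r ∈ P) (hrw : r ≠ w)
    (hf : r ∉ Far G P Aj Ak w) : Pair G P Ai Aj Ak r := by
  obtain ⟨xj, hj, hj'⟩ := hj
  obtain ⟨xk, hk, hk'⟩ := hk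
  obtain ⟨x, hx, hcx⟩ := hc w r hr hrw
  rcases hU hx with hx | hx
  swap
  · exact (hf ⟨x, hx, hcx⟩).elim
  have hno : ∀ y ∈ Aj ∪ Ak, y ∉ cmp G (P \ {w}) r := fun y hy h => hf ⟨y, hy, h⟩
  have hrest : Connd G (P \ cmp G (P \ {w}) r) := by
    refine leaf_rest hP hw (fun h => (cmp_sub h).2 rfl) ?_
    intro z hz v hv hzv
    by_cases e : v = w
    · exact Or.inr e
    · exact Or.inl (cmp_closed hz ⟨hv, e⟩ hzv)
  exact ⟨cmp G (P \ {w}) r, P \ cmp G (P \ {w}) r, Set.disjoint_sdiff_right,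
    fun z hz => (cmp_sub hz).1, Set.sdiff_subset, x, hx, xj, hj, xk, hk,
    (Conn.comp hcx).symm, hrest _ ⟨hj', hno _ (Or.inl hj)⟩ _ ⟨hk', hno _ (Or.inr hk)⟩⟩

theorem side_c {w' : V} (hP : Connd G P) (hi : (Ai ∩ P).Nonempty)
    (hw : w ∈ P)
    (hv' : ∀ x ∈ Ai, x ∉ Far G P Aj Ak w') (hv : ∀ x ∈ Ai, x ∉ Far G P Aj Ak w) :
    Far G P Aj Ak w ⊆ Far G P Aj Ak w' ∨ Far G P Aj Ak w' ⊆ Far G P Aj Ak w := by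
  obtain ⟨xi, hi, hi'⟩ := hi
  by_cases h : w' ∈ Far G P Aj Ak w
  · right
    intro v hvf
    by_contra hvn
    have hrest : Connd G (P \ Far G P Aj Ak w) := by
      refine leaf_rest hP hw (fun h => (far_sub h).2 rfl) ?_
      intro z hz v hv hzv
      by_cases e : v = w
      · exact Or.inr e
      · exact Or.inl (far_step hz hv e hzv)
    have hc := hrest xi ⟨hi', hv _ hi⟩ v ⟨(far_sub hvf).1, hvn⟩
    obtain ⟨x, hx, hcx⟩ := hvf
    refine hv' xi hi ⟨x, hx, (hc.mono ?_).trans hcx⟩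
    rintro q ⟨hq, hq'⟩
    exact ⟨hq, by rintro rfl; exact hq' h⟩
  · left
    rintro v ⟨x, hx, hc⟩
    refine ⟨x, hx, ?_⟩
    have := hc.symm.diff (w := w') (fun hxw => h ⟨x, hx, Conn.symm hxw⟩)
    refine (this.mono ?_).symm
    rintro q ⟨hq, hq'⟩
    exact ⟨hq.1, hq'⟩

theorem side_II [Finite V] (hP : Connd G P) (hi : (Ai ∩ P).Nonempty) (hj : (Aj ∩ P).Nonempty)
    (hk : (Ak ∩ P).Nonempty) (hc : Clean G P U) (hU : U ⊆ Ai ∪ (Aj ∪ Ak))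
    (hval : ∃ w ∈ P, ∀ x ∈ Ai, x ∉ Far G P Aj Ak w) :
    ∃ w ∈ P, (∀ x ∈ Ai, x ∉ Far G P Aj Ak w) ∧
      (∀ r ∈ Far G P Aj Ak w, Pair G P Aj Ai Ak r ∨ Pair G P Ak Ai Aj r) ∧
      (∀ r ∈ P, r ∉ Far G P Aj Ak w → r ≠ w → Pair G P Ai Aj Ak r) := by
  obtain ⟨w0, hw0, hv0⟩ := hval
  obtain ⟨w, ⟨hwP, hwv⟩, hmin⟩ := Set.exists_min_image {w | w ∈ P ∧ ∀ x ∈ Ai, x ∉ Far G P Aj Ak w}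
    (fun w => (Far G P Aj Ak w).ncard) (Set.toFinite _) ⟨w0, hw0, hv0⟩
  refine ⟨w, hwP, hwv, ?_, fun r hr hrf hrw => side_b hP hj hk hc hU hwP hr hrw hrf⟩
  intro r hr
  rcases side_a hP hi hj hk (far_sub hr).1 with h | h | ⟨w', hw', hrw', hv'⟩
  · exact Or.inl h
  · exact Or.inr h
  · exfalso
    have hle := hmin w' ⟨hw', hv'⟩
    rcases side_c hP hi hwP hv' hwv with h | h
    · exact hrw' (h hr)
    · have := Set.eq_of_subset_of_ncard_le h hle (Set.toFinite _)
      rw [this] at hrw'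
      exact hrw' hr

theorem side_I [Finite V] (hP : Connd G P) (hi : (Ai ∩ P).Nonempty) (hj : (Aj ∩ P).Nonempty)
    (hk : (Ak ∩ P).Nonempty) 
    (hval : ¬ ∃ w ∈ P, ∀ x ∈ Ai, x ∉ Far G P Aj Ak w) :
      ∀ r ∈ P, Pair G P Aj Ai Ak r ∨ Pair G P Ak Ai Aj r := by
  intro r hr
  rcases side_a hP hi hj hk hr with h | h | ⟨w', hw', hrw', hv'⟩
  · exact Or.inl h
  · exact Or.inr h
  · exact absurd ⟨w', hw', hv'⟩ hval

end side
end SP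

namespace SP

section lw
variable {V : Type*} {G : SimpleGraph V} {W S T Z1 Z2 : Set V} {a b c1 c2 r r' : V} {L : ℕ}

def Star (G : SimpleGraph V) (W : Set V) (a b : V) : Prop :=
  ∀ K : Set V, K ⊆ W \ {a, b} → K.Nonempty → K ≠ W \ {a, b} → ∀ s t,
    ∃ u ∈ K, ∃ v ∈ W, v ∉ K ∧ v ≠ s ∧ v ≠ t ∧ G.Adj u v

structure Good (G : SimpleGraph V) (W : Set V) (a b c1 c2 : V) (Z1 Z2 : Set V) (L : ℕ) (S T : Set V) : Prop where
  star : Star G W a b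
  ne1 : Z1.Nonempty
  ne2 : Z2.Nonempty
  lens1 : ∀ u ∈ Z1, ∃ c ∈ Z1, G.Adj c1 c ∧ Reach G Z1 c u L
  lens2 : ∀ u ∈ Z2, ∃ c ∈ Z2, G.Adj c2 c ∧ Reach G Z2 c u L
  SW : S ⊆ W
  TW : T ⊆ W
  Z1W : Z1 ⊆ W
  Z2W : Z2 ⊆ W
  un : ∀ x ∈ W, x ∈ S ∨ x ∈ T ∨ x ∈ Z1 ∨ x ∈ Z2
  dST : Disjoint S T
  dS1 : Disjoint S Z1
  dS2 : Disjoint S Z2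
  dT1 : Disjoint T Z1
  dT2 : Disjoint T Z2
  d12 : Disjoint Z1 Z2
  cS : Connd G S
  cT : Connd G T
  aS : a ∈ S
  c1S : c1 ∈ S
  c2S : c2 ∈ S
  bT : b ∈ T
  c12 : Conn G (S \ {a}) c1 c2
  z1S : ∀ z ∈ Z1, ∀ v ∈ S, G.Adj z v → v = c1
  z2S : ∀ z ∈ Z2, ∀ v ∈ S, G.Adj z v → v = c2
  z12 : ∀ z ∈ Z1, ∀ v ∈ Z2, ¬ G.Adj z v
  cross : ∃ r ∈ S, ∃ r' ∈ T, G.Adj r r' ∧ ¬ (r = a ∧ r' = b)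

def Nb (G : SimpleGraph V) (Z T : Set V) : Set V := {t | t ∈ T ∧ ∃ z ∈ Z, G.Adj z t}

theorem Good.swap (h : Good G W a b c1 c2 Z1 Z2 L S T) : Good G W a b c2 c1 Z2 Z1 L S T where
  star := h.star
  ne1 := h.ne2
  ne2 := h.ne1
  lens1 := h.lens2
  lens2 := h.lens1
  SW := h.SW
  TW := h.TW
  Z1W := h.Z2W
  Z2W := h.Z1W
  un x hx := by have := h.un x hx; tauto
  dST := h.dST
  dS1 := h.dS2
  dS2 := h.dS1
  dT1 := h.dT2
  dT2 := h.dT1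
  d12 := h.d12.symm
  cS := h.cS
  cT := h.cT
  aS := h.aS
  c1S := h.c2S
  c2S := h.c1S
  bT := h.bT
  c12 := h.c12.symm
  z1S := h.z2S
  z2S := h.z1S
  z12 z hz v hv e := h.z12 v hv z hz e.symm
  cross := h.cross

theorem chain6 {A1 A2 A3 A4 A5 A6 : Set V} {p1 q1 p2 q2 p3 q3 p4 q4 p5 q5 p6 q6 : V} {n1 n2 n3 n4 n5 n6 : ℕ}
    (h1 : Reach G A1 p1 q1 n1) (h2 : Reach G A2 p2 q2 n2) (h3 : Reach G A3 p3 q3 n3)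
    (h4 : Reach G A4 p4 q4 n4) (h5 : Reach G A5 p5 q5 n5) (h6 : Reach G A6 p6 q6 n6)
    (e1 : G.Adj q1 p2) (e2 : G.Adj q2 p3) (e3 : G.Adj q3 p4) (e4 : G.Adj q4 p5) (e5 : G.Adj q5 p6)
    (d12 : Disjoint A1 A2) (d13 : Disjoint A1 A3) (d14 : Disjoint A1 A4) (d15 : Disjoint A1 A5) (d16 : Disjoint A1 A6)
    (d23 : Disjoint A2 A3) (d24 : Disjoint A2 A4) (d25 : Disjoint A2 A5) (d26 : Disjoint A2 A6)
    (d34 : Disjoint A3 A4) (d35 : Disjoint A3 A5) (d36 : Disjoint A3 A6)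
    (d45 : Disjoint A4 A5) (d46 : Disjoint A4 A6) (d56 : Disjoint A5 A6)
    (s1 : A1 ⊆ W) (s2 : A2 ⊆ W) (s3 : A3 ⊆ W) (s4 : A4 ⊆ W) (s5 : A5 ⊆ W) (s6 : A6 ⊆ W) :
    Reach G W p1 q6 (n1 + n2 + n3 + n4 + n5 + n6 + 5) := by
  have g := ((((h1.join e1 h2 d12).join e2 h3 (by simp [*])).join e3 h4 (by simp [*])).join e4 h5
    (by simp [*])).join e5 h6 (by simp [*])
  refine (g.mono ?_).le (by omega)
  simp [*]

theorem Good.win01 (h : Good G W a b c1 c2 Z1 Z2 L S T) (hrr : G.Adj r r')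
    (hS : Pair G S {a} {c1} {c2} r) (hT : Pair G T (Nb G Z1 T) {b} (Nb G Z2 T) r') : 
    Reach G W a b (2 * L + 4) := by
  obtain ⟨B1, B2, hd, s1, s2, _, rfl, _, rfl, _, rfl, k1, k2⟩ := hS
  obtain ⟨C1, C2, hd', s1', s2', n1, ⟨-, z1, hz1, e1⟩, _, rfl, n2, ⟨-, z2, hz2, e2⟩, k1', k2'⟩ := hT
  obtain ⟨c, hc, ec, hr⟩ := h.lens1 z1 hz1
  obtain ⟨c', hc', ec', hr'⟩ := h.lens2 z2 hz2
  refine (chain6 (W := W) k1.reach k1'.symm.reach hr.symm k2.reach hr' k2'.symm.reach hrr e1.symm ec.symm ec' e2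
    (h.dST.mono s1 s1') (h.dS1.mono_left s1) hd (h.dS2.mono_left s1) (h.dST.mono s1 s2')
    (h.dT1.mono_left s1') (h.dST.mono s2 s1').symm (h.dT2.mono_left s1') hd' (h.dS1.mono_left s2).symm
    h.d12 (h.dT1.mono_left s2').symm (h.dS2.mono_left s2) (h.dST.mono s2 s2') (h.dT2.mono_left s2').symm
    (s1.trans h.SW) (s1'.trans h.TW) h.Z1W (s2.trans h.SW) h.Z2W (s2'.trans h.TW)).le (by omega)

theorem Good.win10 (h : Good G W a b c1 c2 Z1 Z2 L S T) (hrr : G.Adj r r')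
    (hS : Pair G S {c1} {a} {c2} r) (hT : Pair G T {b} (Nb G Z1 T) (Nb G Z2 T) r') : 
    Reach G W a b (2 * L + 4) := by
  obtain ⟨B1, B2, hd, s1, s2, _, rfl, _, rfl, _, rfl, k1, k2⟩ := hS
  obtain ⟨C1, C2, hd', s1', s2', _, rfl, n1, ⟨-, z1, hz1, e1⟩, n2, ⟨-, z2, hz2, e2⟩, k1', k2'⟩ := hT
  obtain ⟨c, hc, ec, hr⟩ := h.lens1 z1 hz1
  obtain ⟨c', hc', ec', hr'⟩ := h.lens2 z2 hz2
  refine (chain6 (W := W) k2.reach hr' k2'.symm.reach hr.symm k1.reach k1'.symm.reach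
    ec' e2 e1.symm ec.symm hrr
    (h.dS2.mono_left s2) (h.dST.mono s2 s2') (h.dS1.mono_left s2) hd.symm (h.dST.mono s2 s1')
    (h.dT2.mono_left s2').symm h.d12.symm (h.dS2.mono_left s1).symm (h.dT2.mono_left s1').symm
    (h.dT1.mono_left s2') (h.dST.mono s1 s2').symm hd'.symm (h.dS1.mono_left s1).symm
    (h.dT1.mono_left s1').symm (h.dST.mono s1 s1')
    (s2.trans h.SW) h.Z2W (s2'.trans h.TW) h.Z1W (s1.trans h.SW) (s1'.trans h.TW)).le (by omega)

theorem Good.win12 (h : Good G W a b c1 c2 Z1 Z2 L S T) (hrr : G.Adj r r')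
    (hS : Pair G S {c1} {a} {c2} r) (hT : Pair G T (Nb G Z2 T) {b} (Nb G Z1 T) r') : 
    Reach G W a b (2 * L + 4) := by
  obtain ⟨B1, B2, hd, s1, s2, _, rfl, _, rfl, _, rfl, k1, k2⟩ := hS
  obtain ⟨C1, C2, hd', s1', s2', n2, ⟨-, z2, hz2, e2⟩, _, rfl, n1, ⟨-, z1, hz1, e1⟩, k1', k2'⟩ := hT
  obtain ⟨c, hc, ec, hr⟩ := h.lens1 z1 hz1
  obtain ⟨c', hc', ec', hr'⟩ := h.lens2 z2 hz2
  refine (chain6 (W := W) k2.reach hr' k1'.reach k1.symm.reach hr k2'.symm.reach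
    ec' e2 hrr.symm ec e1
    (h.dS2.mono_left s2) (h.dST.mono s2 s1') hd.symm (h.dS1.mono_left s2) (h.dST.mono s2 s2')
    (h.dT2.mono_left s1').symm (h.dS2.mono_left s1).symm h.d12.symm (h.dT2.mono_left s2').symm
    (h.dST.mono s1 s1').symm (h.dT1.mono_left s1') hd' (h.dS1.mono_left s1) (h.dST.mono s1 s2')
    (h.dT1.mono_left s2').symm
    (s2.trans h.SW) h.Z2W (s1'.trans h.TW) (s1.trans h.SW) h.Z1W (s2'.trans h.TW)).le (by omega)

theorem Good.memK (h : Good G W a b c1 c2 Z1 Z2 L S T) {K : Set V} (hK : K ⊆ W) (ha : a ∉ K) (hb : b ∉ K) :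
    K ⊆ W \ {a, b} := by
  intro x hx
  refine ⟨hK hx, ?_⟩
  rintro (rfl | rfl)
  · exact ha hx
  · exact hb hx

theorem Good.nb1 (h : Good G W a b c1 c2 Z1 Z2 L S T) : (Nb G Z1 T ∩ T).Nonempty := by
  have ha : a ∉ Z1 := fun hh => Set.disjoint_left.1 h.dS1 h.aS hh
  have hb : b ∉ Z1 := fun hh => Set.disjoint_left.1 h.dT1 h.bT hh
  obtain ⟨z2, hz2⟩ := h.ne2
  have ha2 : a ∉ Z2 := fun hh => Set.disjoint_left.1 h.dS2 h.aS hh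
  have hb2 : b ∉ Z2 := fun hh => Set.disjoint_left.1 h.dT2 h.bT hh
  obtain ⟨u, hu, v, hv, hvK, hvc, -, e⟩ := h.star Z1 (h.memK h.Z1W ha hb) h.ne1 (by
    intro he
    have : z2 ∈ Z1 := by
      rw [he]; exact h.memK h.Z2W ha2 hb2 hz2
    exact Set.disjoint_left.1 h.d12 this hz2) c1 c1
  rcases h.un v hv with hv' | hv' | hv' | hv'
  · exact absurd (h.z1S u hu v hv' e) hvc
  · exact ⟨v, ⟨hv', u, hu, e⟩, hv'⟩
  · exact absurd hv' hvK
  · exact absurd e (h.z12 u hu v hv')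

theorem Good.step1 [Finite V] (h : Good G W a b c1 c2 Z1 Z2 L S T)
    (hcS : Clean G S {a, c1, c2}) (hcT : Clean G T ({b} ∪ (Nb G Z1 T ∪ Nb G Z2 T)))
    (hno : ¬ Reach G W a b (2 * L + 4)) :
    ∀ r ∈ T, Pair G T {b} (Nb G Z1 T) (Nb G Z2 T) r ∨ Pair G T (Nb G Z2 T) {b} (Nb G Z1 T) r := by
  have nS : ∀ x ∈ S, (({x} : Set V) ∩ S).Nonempty := fun x hx => ⟨x, rfl, hx⟩
  have nb : (({b} : Set V) ∩ T).Nonempty := ⟨b, rfl, h.bT⟩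
  have n1 := h.nb1
  have n2 := h.swap.nb1
  by_cases hval : ∃ w ∈ T, ∀ x ∈ Nb G Z1 T, x ∉ Far G T {b} (Nb G Z2 T) w
  swap
  · intro r hr
    rcases side_I h.cT n1 nb n2 hval r hr with h | h
    · exact Or.inl h
    · exact Or.inr h.swap
  exfalso
  obtain ⟨w', hw', hv', hf', hn'⟩ := side_II h.cT n1 nb n2 hcT (by
    rintro x (hx | hx | hx) <;> simp_all) hval
  obtain ⟨w, hw, hv, hf, hn⟩ := side_II (Ai := {c1}) (Aj := {a}) (Ak := {c2}) h.cS (nS _ h.c1S) (nS _ h.aS) (nS _ h.c2S) hcS (by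
    rintro x (hx | hx | hx) <;> simp_all) ⟨c1, h.c1S, by
      rintro x rfl hx
      exact (far_sub hx).2 rfl⟩
  have dj : ∀ {A B : Set V}, Disjoint A B → ∀ {x}, x ∈ A → x ∉ B := fun hd _ hx => Set.disjoint_left.1 hd hx
  obtain ⟨u, hu, v, hvW, hvM, hvw, hvw', e⟩ := h.star
    ((S \ Far G S {a} {c2} w) \ {w} ∪ (T \ Far G T {b} (Nb G Z2 T) w') \ {w'} ∪ Z1)
    (h.memK (by
      rintro x ((hx | hx) | hx)
      · exact h.SW hx.1.1
      · exact h.TW hx.1.1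
      · exact h.Z1W hx) (by
      rintro ((hx | hx) | hx)
      · exact hx.1.2 (far_mem h.aS (Or.inl rfl) hx.2)
      · exact dj h.dST h.aS hx.1.1
      · exact dj h.dS1 h.aS hx) (by
      rintro ((hx | hx) | hx)
      · exact dj h.dST hx.1.1 h.bT
      · exact hx.1.2 (far_mem h.bT (Or.inl rfl) hx.2)
      · exact dj h.dT1 h.bT hx)) (h.ne1.mono Set.subset_union_right) (by
      intro he
      obtain ⟨z2, hz2⟩ := h.ne2
      have hz : z2 ∈ W \ {a, b} := h.memK h.Z2W (dj h.dS2 h.aS) (dj h.dT2 h.bT) hz2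
      rw [← he] at hz
      rcases hz with (hx | hx) | hx
      · exact dj h.dS2 hx.1.1 hz2
      · exact dj h.dT2 hx.1.1 hz2
      · exact dj h.d12 hx hz2) w w'
  have vS : v ∈ S → v ∈ Far G S {a} {c2} w := by
    intro hvS
    by_contra hvf
    exact hvM (Or.inl (Or.inl ⟨⟨hvS, hvf⟩, hvw⟩))
  have vT : v ∈ T → v ∈ Far G T {b} (Nb G Z2 T) w' := by
    intro hvT
    by_contra hvf
    exact hvM (Or.inl (Or.inr ⟨⟨hvT, hvf⟩, hvw'⟩))
  rcases hu with (⟨⟨hu, huf⟩, huw⟩ | ⟨⟨hu, huf⟩, huw⟩) | hu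
  · rcases h.un v hvW with hv1 | hv1 | hv1 | hv1
    · exact huf (far_step (vS hv1) hu huw e.symm)
    · rcases hf' v (vT hv1) with g | g
      · exact hno (h.win10 e (hn u hu huf huw) g)
      · exact hno (h.win12 e (hn u hu huf huw) g.swap)
    · exact hvM (Or.inr hv1)
    · have := h.z2S v hv1 u hu e.symm
      subst this
      exact huf (far_mem hu (Or.inr rfl) huw)
  · rcases h.un v hvW with hv1 | hv1 | hv1 | hv1
    · rcases hf v (vS hv1) with g | g
      · exact hno (h.win01 e.symm g (hn' u hu huf huw))
      · exact hno (h.swap.win12 e.symm g.swap (hn' u hu huf huw))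
    · exact huf (far_step (vT hv1) hu huw e.symm)
    · exact hvM (Or.inr hv1)
    · exact huf (far_mem hu (Or.inr ⟨hu, v, hv1, e.symm⟩) huw)
  · rcases h.un v hvW with hv1 | hv1 | hv1 | hv1
    · have := h.z1S u hu v hv1 e
      subst this
      exact hv _ rfl (vS hv1)
    · exact hv' v ⟨hv1, u, hu, e⟩ (vT hv1)
    · exact hvM (Or.inr hv1)
    · exact h.z12 u hu v hv1 e

theorem Good.lw [Finite V] (h : Good G W a b c1 c2 Z1 Z2 L S T)
    (hcS : Clean G S {a, c1, c2}) (hcT : Clean G T ({b} ∪ (Nb G Z1 T ∪ Nb G Z2 T))) :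
    Reach G W a b (2 * L + 4) := by
  by_contra hno
  have t1 := h.step1 hcS hcT hno
  have t2 := h.swap.step1 (by
    have : ({a, c2, c1} : Set V) = {a, c1, c2} := by ext x; simp; tauto
    rw [this]; exact hcS) (by rw [Set.union_comm (Nb G Z2 T)]; exact hcT) hno
  have nS : ∀ x ∈ S, (({x} : Set V) ∩ S).Nonempty := fun x hx => ⟨x, rfl, hx⟩
  have nb : (({b} : Set V) ∩ T).Nonempty := ⟨b, rfl, h.bT⟩
  have n1 := h.nb1
  have n2 := h.swap.nb1
  have dj : ∀ {A B : Set V}, Disjoint A B → ∀ {x}, x ∈ A → x ∉ B := fun hd _ hx => Set.disjoint_left.1 hd hx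
  obtain ⟨w', hw', hv', hf', hn'⟩ := side_II h.cT nb n1 n2 hcT (by
    rintro x (hx | hx | hx) <;> simp_all) ⟨b, h.bT, by
      rintro x rfl hx
      exact (far_sub hx).2 rfl⟩
  obtain ⟨w, hw, hv, hf, hn⟩ := side_II (Ai := {a}) (Aj := {c1}) (Ak := {c2}) h.cS (nS _ h.aS) (nS _ h.c1S) (nS _ h.c2S) hcS (by
    rintro x (hx | hx | hx) <;> simp_all) ⟨a, h.aS, by
      rintro x rfl hx
      exact (far_sub hx).2 rfl⟩
  have hcr : ∀ r ∈ S, ∀ r' ∈ T, G.Adj r r' → r ∉ Far G S {c1} {c2} w := by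
    intro r hr r' hr' e hrf
    rcases hf r hrf with g | g
    · rcases t1 r' hr' with g' | g'
      · exact hno (h.win10 e g g')
      · exact hno (h.win12 e g g')
    · rcases t2 r' hr' with g' | g'
      · exact hno (h.swap.win10 e g g')
      · exact hno (h.swap.win12 e g g')
  have w01 : ∀ r r', G.Adj r r' → Pair G S {a} {c1} {c2} r → r' ∈ Far G T (Nb G Z1 T) (Nb G Z2 T) w' → False := by
    intro r r' e g hr'
    rcases hf' r' hr' with g' | g'
    · exact hno (h.win01 e g g')
    · exact hno (h.swap.win01 e g.swap g')
  set K := Far G S {c1} {c2} w ∪ Far G T (Nb G Z1 T) (Nb G Z2 T) w' ∪ (Z1 ∪ Z2) with hK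
  have hKH : K ⊆ W \ {a, b} := h.memK (by
      rintro x ((hx | hx) | (hx | hx))
      · exact h.SW (far_sub hx).1
      · exact h.TW (far_sub hx).1
      · exact h.Z1W hx
      · exact h.Z2W hx) (by
      rintro ((hx | hx) | (hx | hx))
      · exact hv _ rfl hx
      · exact dj h.dST h.aS (far_sub hx).1
      · exact dj h.dS1 h.aS hx
      · exact dj h.dS2 h.aS hx) (by
      rintro ((hx | hx) | (hx | hx))
      · exact dj h.dST (far_sub hx).1 h.bT
      · exact hv' _ rfl hx
      · exact dj h.dT1 h.bT hx
      · exact dj h.dT2 h.bT hx)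
  have hKS : ∀ x ∈ S, x ∈ K → x ∈ Far G S {c1} {c2} w := by
    rintro x hxS ((hx | hx) | (hx | hx))
    · exact hx
    · exact absurd (far_sub hx).1 (dj h.dST hxS)
    · exact absurd hx (dj h.dS1 hxS)
    · exact absurd hx (dj h.dS2 hxS)
  have hKT : ∀ x ∈ T, x ∈ K → x ∈ Far G T (Nb G Z1 T) (Nb G Z2 T) w' := by
    rintro x hxS ((hx | hx) | (hx | hx))
    · exact absurd hxS (dj h.dST (far_sub hx).1)
    · exact hx
    · exact absurd hx (dj h.dT1 hxS)
    · exact absurd hx (dj h.dT2 hxS)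
  by_cases hKe : K = W \ {a, b}
  · obtain ⟨r, hr, r', hr', e, hne⟩ := h.cross
    have ra : r = a := by
      by_contra hra
      have : r ∈ K := by
        rw [hKe]; refine ⟨h.SW hr, ?_⟩
        rintro (hh | hh)
        · exact hra hh
        · rw [hh] at hr; exact dj h.dST hr h.bT
      exact hcr r hr r' hr' e (hKS r hr this)
    have rb : r' ≠ b := fun hb => hne ⟨ra, hb⟩
    have : r' ∈ K := by
      rw [hKe]; refine ⟨h.TW hr', ?_⟩
      rintro (hh | hh)
      · rw [hh] at hr'; exact dj h.dST h.aS hr'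
      · exact rb hh
    refine w01 r r' e ?_ (hKT r' hr' this)
    rw [ra]
    exact ⟨{a}, S \ {a}, Set.disjoint_sdiff_right, by simpa using h.aS, Set.sdiff_subset, a, rfl, c1, rfl, c2, rfl,
      .refl rfl, h.c12⟩
  · obtain ⟨u, hu, v, hvW, hvK, hvw, hvw', e⟩ := h.star K hKH (h.ne1.mono fun x hx => Or.inr (Or.inl hx)) hKe w w'
    rcases hu with (hu | hu) | (hu | hu)
    · rcases h.un v hvW with hv1 | hv1 | hv1 | hv1
      · exact hvK (Or.inl (Or.inl (far_step hu hv1 hvw e)))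
      · exact hcr u (far_sub hu).1 v hv1 e hu
      · exact hvK (Or.inr (Or.inl hv1))
      · exact hvK (Or.inr (Or.inr hv1))
    · rcases h.un v hvW with hv1 | hv1 | hv1 | hv1
      · exact w01 v u e.symm (hn v hv1 (fun hh => hvK (Or.inl (Or.inl hh))) hvw) hu
      · exact hvK (Or.inl (Or.inr (far_step hu hv1 hvw' e)))
      · exact hvK (Or.inr (Or.inl hv1))
      · exact hvK (Or.inr (Or.inr hv1))
    · rcases h.un v hvW with hv1 | hv1 | hv1 | hv1
      · have := h.z1S u hu v hv1 e
        subst this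
        exact hvK (Or.inl (Or.inl (far_mem hv1 (Or.inl rfl) hvw)))
      · exact hvK (Or.inl (Or.inr (far_mem hv1 (Or.inl ⟨hv1, u, hu, e⟩) hvw')))
      · exact hvK (Or.inr (Or.inl hv1))
      · exact hvK (Or.inr (Or.inr hv1))
    · rcases h.un v hvW with hv1 | hv1 | hv1 | hv1
      · have := h.z2S u hu v hv1 e
        subst this
        exact hvK (Or.inl (Or.inl (far_mem hv1 (Or.inr rfl) hvw)))
      · exact hvK (Or.inl (Or.inr (far_mem hv1 (Or.inr ⟨hv1, u, hu, e⟩) hvw')))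
      · exact hvK (Or.inr (Or.inl hv1))
      · exact hvK (Or.inr (Or.inr hv1))

end lw
end SP

namespace SP

section cleaning
variable {V : Type*} {G : SimpleGraph V} {W S T Z1 Z2 : Set V} {a b c1 c2 r r' : V} {L : ℕ}

theorem Good.neH (h : Good G W a b c1 c2 Z1 Z2 L S T) {K : Set V} (hK : Disjoint K Z1) : K ≠ W \ {a, b} := by
  intro he
  obtain ⟨z, hz⟩ := h.ne1
  have : z ∈ W \ {a, b} := h.memK h.Z1W (fun hh => Set.disjoint_left.1 h.dS1 h.aS hh)
    (fun hh => Set.disjoint_left.1 h.dT1 h.bT hh) hz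
  rw [← he] at this
  exact Set.disjoint_left.1 hK this hz

theorem Good.phase1 [Finite V] : ∀ (n : ℕ) (S T : Set V), T.ncard = n → Good G W a b c1 c2 Z1 Z2 L S T →
    ∃ S T, Good G W a b c1 c2 Z1 Z2 L S T ∧ Clean G T ({b} ∪ (Nb G Z1 T ∪ Nb G Z2 T)) := by
  intro n
  induction n using Nat.strong_induction_on with
  | _ n ih =>
  intro S T hn h
  by_cases hc : Clean G T ({b} ∪ (Nb G Z1 T ∪ Nb G Z2 T))
  · exact ⟨S, T, h, hc⟩
  unfold Clean at hc
  push Not at hc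
  obtain ⟨w, v, hv, hvw, hno⟩ := hc
  have hwT : w ∈ T := by
    by_contra hw
    rw [Set.sdiff_singleton_eq_self hw] at hno
    exact hno b (Or.inl rfl) (h.cT _ hv _ h.bT)
  set C := cmp G (T \ {w}) v with hC
  have hCT : C ⊆ T := fun x hx => (cmp_sub hx).1
  have hwC : w ∉ C := fun hx => (cmp_sub hx).2 rfl
  have hvC : v ∈ C := Conn.refl ⟨hv, hvw⟩
  have hbC : b ∉ C := fun hx => hno b (Or.inl rfl) hx
  have h1C : ∀ x ∈ C, ∀ z ∈ Z1, ¬ G.Adj z x := fun x hx z hz e =>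
    hno x (Or.inr (Or.inl ⟨hCT hx, z, hz, e⟩)) hx
  have h2C : ∀ x ∈ C, ∀ z ∈ Z2, ¬ G.Adj z x := fun x hx z hz e =>
    hno x (Or.inr (Or.inr ⟨hCT hx, z, hz, e⟩)) hx
  have hcl : ∀ z ∈ C, ∀ q ∈ T, G.Adj z q → q ∈ C ∨ q = w := by
    intro z hz q hq e
    by_cases hqw : q = w
    · exact Or.inr hqw
    · exact Or.inl (cmp_closed hz ⟨hq, hqw⟩ e)
  have haC : a ∉ C := fun hx => Set.disjoint_left.1 h.dST h.aS (hCT hx)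
  obtain ⟨p, hp, q, hq, hqC, hqw, -, e⟩ := h.star C (h.memK (hCT.trans h.TW) haC hbC) ⟨v, hvC⟩
    (h.neH (h.dT1.mono_left hCT)) w w
  have hqS : q ∈ S := by
    rcases h.un q hq with h' | h' | h' | h'
    · exact h'
    · rcases hcl p hp q h' e with h' | h'
      · exact absurd h' hqC
      · exact absurd h' hqw
    · exact absurd e.symm (h1C p hp q h')
    · exact absurd e.symm (h2C p hp q h')
  have hlt : (T \ C).ncard < n := by
    rw [← hn]
    exact Set.ncard_lt_ncard ⟨Set.sdiff_subset, fun hs => (hs hv).2 hvC⟩ (Set.toFinite _)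
  obtain ⟨x, hx, y, hy, hyC, exy, -⟩ := (h.cT v hv w hwT).exit C hvC hwC
  have hyw : y = w := by
    rcases hcl x hx y hy exy with h' | h'
    · exact absurd h' hyC
    · exact h'
  refine ih _ hlt (S ∪ C) (T \ C) rfl ?_
  exact
  { star := h.star, ne1 := h.ne1, ne2 := h.ne2, lens1 := h.lens1, lens2 := h.lens2
    SW := Set.union_subset h.SW (hCT.trans h.TW)
    TW := Set.sdiff_subset.trans h.TW
    Z1W := h.Z1W
    Z2W := h.Z2W
    un := by
      intro x hx
      rcases h.un x hx with h' | h' | h' | h'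
      · exact Or.inl (Or.inl h')
      · by_cases hxC : x ∈ C
        · exact Or.inl (Or.inr hxC)
        · exact Or.inr (Or.inl ⟨h', hxC⟩)
      · tauto
      · tauto
    dST := by
      rw [Set.disjoint_union_left]
      exact ⟨h.dST.mono_right Set.sdiff_subset, Set.disjoint_sdiff_right⟩
    dS1 := by
      rw [Set.disjoint_union_left]
      exact ⟨h.dS1, h.dT1.mono_left hCT⟩
    dS2 := by
      rw [Set.disjoint_union_left]
      exact ⟨h.dS2, h.dT2.mono_left hCT⟩
    dT1 := h.dT1.mono_left Set.sdiff_subset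
    dT2 := h.dT2.mono_left Set.sdiff_subset
    d12 := h.d12
    cS := h.cS.union cmp_connd hqS hp e.symm
    cT := leaf_rest h.cT hwT hwC hcl
    aS := Or.inl h.aS
    c1S := Or.inl h.c1S
    c2S := Or.inl h.c2S
    bT := ⟨h.bT, hbC⟩
    c12 := h.c12.mono (Set.sdiff_subset_sdiff_left Set.subset_union_left)
    z1S := by
      rintro z hz v (hv | hv) e
      · exact h.z1S z hz v hv e
      · exact absurd e (h1C v hv z hz)
    z2S := by
      rintro z hz v (hv | hv) e
      · exact h.z2S z hz v hv e
      · exact absurd e (h2C v hv z hz)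
    z12 := h.z12
    cross := by
      subst hyw
      exact ⟨x, Or.inr hx, y, ⟨hwT, hwC⟩, exy, by rintro ⟨rfl, -⟩; exact haC hx⟩ }

theorem Good.phase2 [Finite V] : ∀ (n : ℕ) (S T : Set V), S.ncard = n → Good G W a b c1 c2 Z1 Z2 L S T →
    Clean G T ({b} ∪ (Nb G Z1 T ∪ Nb G Z2 T)) →
    ∃ S T, Good G W a b c1 c2 Z1 Z2 L S T ∧ Clean G T ({b} ∪ (Nb G Z1 T ∪ Nb G Z2 T)) ∧
      Clean G S {a, c1, c2} := by
  intro n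
  induction n using Nat.strong_induction_on with
  | _ n ih =>
  intro S T hn h hcT
  by_cases hc : Clean G S {a, c1, c2}
  · exact ⟨S, T, h, hcT, hc⟩
  unfold Clean at hc
  push Not at hc
  obtain ⟨w, v, hv, hvw, hno⟩ := hc
  have hwS : w ∈ S := by
    by_contra hw
    rw [Set.sdiff_singleton_eq_self hw] at hno
    exact hno a (Or.inl rfl) (h.cS _ hv _ h.aS)
  set C := cmp G (S \ {w}) v with hC
  have hCS : C ⊆ S := fun x hx => (cmp_sub hx).1
  have hwC : w ∉ C := fun hx => (cmp_sub hx).2 rfl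
  have hvC : v ∈ C := Conn.refl ⟨hv, hvw⟩
  have haC : a ∉ C := fun hx => hno a (by simp) hx
  have hc1C : c1 ∉ C := fun hx => hno c1 (by simp) hx
  have hc2C : c2 ∉ C := fun hx => hno c2 (by simp) hx
  have h1C : ∀ x ∈ C, ∀ z ∈ Z1, ¬ G.Adj z x := fun x hx z hz e => by
    have := h.z1S z hz x (hCS hx) e
    rw [this] at hx; exact hc1C hx
  have h2C : ∀ x ∈ C, ∀ z ∈ Z2, ¬ G.Adj z x := fun x hx z hz e => by
    have := h.z2S z hz x (hCS hx) e
    rw [this] at hx; exact hc2C hx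
  have hcl : ∀ z ∈ C, ∀ q ∈ S, G.Adj z q → q ∈ C ∨ q = w := by
    intro z hz q hq e
    by_cases hqw : q = w
    · exact Or.inr hqw
    · exact Or.inl (cmp_closed hz ⟨hq, hqw⟩ e)
  have hbC : b ∉ C := fun hx => Set.disjoint_left.1 h.dST (hCS hx) h.bT
  -- escaping from subsets of C
  have esc : ∀ K ⊆ C, K.Nonempty → ∀ w', ∃ p ∈ K, ∃ q, q ∉ K ∧ q ≠ w' ∧ G.Adj p q ∧ (q ∈ C ∨ q ∈ T) := by
    intro K hKC hKne w'
    obtain ⟨p, hp, q, hq, hqC, hqw, hqw', e⟩ := h.star K (h.memK (hKC.trans (hCS.trans h.SW))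
      (fun hh => haC (hKC hh)) (fun hh => hbC (hKC hh))) hKne
      (h.neH (h.dS1.mono_left (hKC.trans hCS))) w w'
    refine ⟨p, hp, q, hqC, hqw', e, ?_⟩
    rcases h.un q hq with h' | h' | h' | h'
    · rcases hcl p (hKC hp) q h' e with h' | h'
      · exact Or.inl h'
      · exact absurd h' hqw
    · exact Or.inr h'
    · exact absurd e.symm (h1C p (hKC hp) q h')
    · exact absurd e.symm (h2C p (hKC hp) q h')
  obtain ⟨p, hp, q, hqC, -, e, hq⟩ := esc C subset_rfl ⟨v, hvC⟩ w
  have hqT : q ∈ T := hq.resolve_left hqC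
  have hlt : (S \ C).ncard < n := by
    rw [← hn]
    exact Set.ncard_lt_ncard ⟨Set.sdiff_subset, fun hs => (hs hv).2 hvC⟩ (Set.toFinite _)
  obtain ⟨x, hx, y, hy, hyC, exy, -⟩ := (h.cS v hv w hwS).exit C hvC hwC
  have hyw : y = w := by
    rcases hcl x hx y hy exy with h' | h'
    · exact absurd h' hyC
    · exact h'
  refine ih _ hlt (S \ C) (T ∪ C) rfl ?_ ?_
  · exact
    { star := h.star, ne1 := h.ne1, ne2 := h.ne2, lens1 := h.lens1, lens2 := h.lens2
      TW := Set.union_subset h.TW (hCS.trans h.SW)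
      SW := Set.sdiff_subset.trans h.SW
      Z1W := h.Z1W
      Z2W := h.Z2W
      un := by
        intro x hx
        rcases h.un x hx with h' | h' | h' | h'
        · by_cases hxC : x ∈ C
          · exact Or.inr (Or.inl (Or.inr hxC))
          · exact (Or.inl ⟨h', hxC⟩)
        · exact Or.inr (Or.inl (Or.inl h'))
        · tauto
        · tauto
      dST := by
        rw [Set.disjoint_union_right]
        exact ⟨h.dST.mono_left Set.sdiff_subset, Set.disjoint_sdiff_left⟩
      dT1 := by
        rw [Set.disjoint_union_left]
        exact ⟨h.dT1, h.dS1.mono_left hCS⟩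
      dT2 := by
        rw [Set.disjoint_union_left]
        exact ⟨h.dT2, h.dS2.mono_left hCS⟩
      dS1 := h.dS1.mono_left Set.sdiff_subset
      dS2 := h.dS2.mono_left Set.sdiff_subset
      d12 := h.d12
      cT := h.cT.union cmp_connd hqT hp e.symm
      cS := leaf_rest h.cS hwS hwC hcl
      aS := ⟨h.aS, haC⟩
      c1S := ⟨h.c1S, hc1C⟩
      c2S := ⟨h.c2S, hc2C⟩
      bT := Or.inl h.bT
      c12 := by
        have := h.c12.rest (Z := C) (s := w) hc1C hc2C (by
          intro z hz q hq e
          exact hcl z hz q hq.1 e)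
        refine this.mono ?_
        rintro x ⟨⟨h1, h2⟩, h3⟩
        exact ⟨⟨h1, h3⟩, h2⟩
      z1S := fun z hz v hv e => h.z1S z hz v hv.1 e
      z2S := fun z hz v hv e => h.z2S z hz v hv.1 e
      z12 := h.z12
      cross := by
        subst hyw
        exact ⟨y, ⟨hwS, hwC⟩, x, Or.inr hx, exy.symm, by rintro ⟨-, rfl⟩; exact hbC hx⟩ }
  · have monoU : ({b} ∪ (Nb G Z1 T ∪ Nb G Z2 T)) ⊆ ({b} ∪ (Nb G Z1 (T ∪ C) ∪ Nb G Z2 (T ∪ C))) := by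
      rintro x (hx | ⟨hx, hx'⟩ | ⟨hx, hx'⟩)
      · exact Or.inl hx
      · exact Or.inr (Or.inl ⟨Or.inl hx, hx'⟩)
      · exact Or.inr (Or.inr ⟨Or.inl hx, hx'⟩)
    have hT : ∀ w', ∀ v ∈ T, v ≠ w' → ∃ x ∈ ({b} ∪ (Nb G Z1 (T ∪ C) ∪ Nb G Z2 (T ∪ C))),
        Conn G ((T ∪ C) \ {w'}) v x := by
      intro w' v hv hvw'
      obtain ⟨x, hx, hcx⟩ := hcT w' v hv hvw'
      exact ⟨x, monoU hx, hcx.mono (Set.sdiff_subset_sdiff_left Set.subset_union_left)⟩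
    rintro w' v' (hv' | hv') hvw'
    · exact hT w' v' hv' hvw'
    · have hK : cmp G (C \ {w'}) v' ⊆ C := fun x hx => (cmp_sub hx).1
      have hvK : v' ∈ cmp G (C \ {w'}) v' := Conn.refl ⟨hv', hvw'⟩
      obtain ⟨p, hp, q, hqK, hqw', e, hq⟩ := esc _ hK ⟨v', hvK⟩ w'
      have hqT : q ∈ T := by
        rcases hq with hq | hq
        · exact absurd (cmp_closed hp ⟨hq, hqw'⟩ e) hqK
        · exact hq
      obtain ⟨x, hx, hcx⟩ := hT w' q hqT hqw'
      refine ⟨x, hx, Conn.trans (Conn.step (Conn.mono hp ?_) e hcx.left) hcx⟩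
      rintro z ⟨hz, hz'⟩
      exact ⟨Or.inr hz, hz'⟩

theorem Good.final [Finite V] (h : Good G W a b c1 c2 Z1 Z2 L S T) : Reach G W a b (2 * L + 4) := by
  obtain ⟨S1, T1, h1, c1⟩ := Good.phase1 _ S T rfl h
  obtain ⟨S2, T2, h2, c2, c3⟩ := Good.phase2 _ S1 T1 rfl h1 c1
  exact h2.lw c3 c2

end cleaning
end SP

namespace SP

section caseB
variable {V : Type*} {G : SimpleGraph V} {W X Y Z1 Z2 : Set V} {a b c1 c2 r r' : V} {D L : ℕ}

theorem chain5 {A1 A2 A3 A4 A5 : Set V} {p1 q1 p2 q2 p3 q3 p4 q4 p5 q5 : V} {n1 n2 n3 n4 n5 : ℕ}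
    (h1 : Reach G A1 p1 q1 n1) (h2 : Reach G A2 p2 q2 n2) (h3 : Reach G A3 p3 q3 n3)
    (h4 : Reach G A4 p4 q4 n4) (h5 : Reach G A5 p5 q5 n5) 
    (e1 : G.Adj q1 p2) (e2 : G.Adj q2 p3) (e3 : G.Adj q3 p4) (e4 : G.Adj q4 p5) 
    (d12 : Disjoint A1 A2) (d13 : Disjoint A1 A3) (d14 : Disjoint A1 A4) (d15 : Disjoint A1 A5) 
    (d23 : Disjoint A2 A3) (d24 : Disjoint A2 A4) (d25 : Disjoint A2 A5) 
    (d34 : Disjoint A3 A4) (d35 : Disjoint A3 A5) 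
    (d45 : Disjoint A4 A5)
    (s1 : A1 ⊆ W) (s2 : A2 ⊆ W) (s3 : A3 ⊆ W) (s4 : A4 ⊆ W) (s5 : A5 ⊆ W) :
    Reach G W p1 q5 (n1 + n2 + n3 + n4 + n5 + 4) := by
  have g := (((h1.join e1 h2 d12).join e2 h3 (by simp [*])).join e3 h4 (by simp [*])).join e4 h5
    (by simp [*])
  refine (g.mono ?_).le (by omega)
  simp [*]

structure Setup (G : SimpleGraph V) (W : Set V) (a b : V) (X Y : Set V) (D L : ℕ) : Prop where
  star : Star G W a b
  ih : IHat G W D L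
  hD : 1 ≤ D
  hL : D ≤ 1 → L = 0
  ab : a ≠ b
  aW : a ∈ W
  bW : b ∈ W
  XW : X ⊆ W
  YW : Y ⊆ W
  aX : a ∉ X
  bX : b ∉ X
  aY : a ∉ Y
  bY : b ∉ Y
  un : ∀ x ∈ W, x = a ∨ x = b ∨ x ∈ X ∨ x ∈ Y
  dXY : Disjoint X Y
  cX : Connd G X
  cY : Connd G Y
  degX : ∀ v ∈ X, D ≤ (G.neighborSet v ∩ X).ncard
  degY : ∀ v ∈ Y, D ≤ (G.neighborSet v ∩ Y).ncard
  adjX : ∃ x ∈ X, G.Adj a x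
  adjY : ∃ y ∈ Y, G.Adj b y

theorem Star.swap (h : Star G W a b) : Star G W b a := by
  unfold Star at *
  rw [Set.pair_comm]; exact h

theorem Setup.swap (h : Setup G W a b X Y D L) : Setup G W b a Y X D L where
  star := h.star.swap
  ih := h.ih
  hD := h.hD
  hL := h.hL
  ab := h.ab.symm
  aW := h.bW
  bW := h.aW
  XW := h.YW
  YW := h.XW
  aX := h.bY
  bX := h.aY
  aY := h.bX
  bY := h.aX
  un x hx := by have := h.un x hx; tauto
  dXY := h.dXY.symm
  cX := h.cY
  cY := h.cX
  degX := h.degY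
  degY := h.degX
  adjX := h.adjY
  adjY := h.adjX

theorem Setup.memK (h : Setup G W a b X Y D L) {K : Set V} (hK : K ⊆ X) : K ⊆ W \ {a, b} := by
  intro x hx
  refine ⟨h.XW (hK hx), ?_⟩
  rintro (rfl | rfl)
  · exact h.aX (hK hx)
  · exact h.bX (hK hx)

theorem Setup.neH (h : Setup G W a b X Y D L) {K : Set V} (hK : K ⊆ X) : K ≠ W \ {a, b} := by
  intro he
  obtain ⟨y, hy, -⟩ := h.adjY
  have : y ∈ W \ {a, b} := h.swap.memK subset_rfl hy |> fun hh => by rwa [Set.pair_comm]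
  rw [← he] at this
  exact Set.disjoint_left.1 h.dXY (hK this) hy

theorem singleton_connd (x : V) : Connd G {x} := by
  rintro u rfl v rfl
  exact .refl rfl

theorem Setup.cYb (h : Setup G W a b X Y D L) : Connd G (Y ∪ {b}) := by
  obtain ⟨y, hy, e⟩ := h.adjY
  exact h.cY.union (singleton_connd b) hy rfl e.symm

theorem Setup.rest2 (h : Setup G W a b X Y D L) (l1 : Leaf G X c1 Z1 L) (l2 : Leaf G X c2 Z2 L)
    (h2 : c2 ∉ Z1) : Connd G (X \ (Z1 ∪ Z2)) := by
  have r1 := leaf_rest h.cX l1.sX l1.sZ l1.cl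
  have := leaf_rest (Z := Z2) r1 (s := c2) ⟨l2.sX, h2⟩ l2.sZ (fun z hz v hv e => l2.cl z hz v hv.1 e)
  rwa [Set.sdiff_sdiff] at this

theorem Setup.w1 (h : Setup G W a b X Y D L) (l1 : Leaf G X c1 Z1 L) (l2 : Leaf G X c2 Z2 L)
    (hd : Disjoint Z1 Z2) (h1 : c1 ∉ Z2) (h2 : c2 ∉ Z1) (haz : ∃ z ∈ Z1, G.Adj a z) :
    Reach G W a b (2 * L + 4) := by
  obtain ⟨z1, hz1, e1⟩ := haz
  have hR := h.rest2 l1 l2 h2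
  obtain ⟨u, hu, v, hv, hvK, hvc, hva, e⟩ := h.star Z2 (h.memK l2.sub) l2.ne (h.neH l2.sub) c2 a
  have hvT : v ∈ Y ∪ {b} := by
    rcases h.un v hv with rfl | rfl | h' | h'
    · exact absurd rfl hva
    · exact Or.inr rfl
    · rcases l2.cl u hu v h' e with h' | h'
      · exact absurd h' hvK
      · exact absurd h' hvc
    · exact Or.inl h'
  obtain ⟨c, hc, ec, hr⟩ := l1.lens z1 hz1
  obtain ⟨c', hc', ec', hr'⟩ := l2.lens u hu
  have dXT : Disjoint X (Y ∪ {b}) := by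
    rw [Set.disjoint_union_right]; exact ⟨h.dXY, by simpa using h.bX⟩
  refine (chain5 (W := W) (Conn.refl (G := G) (Set.mem_singleton a)).reach hr.symm
    (hR c1 ⟨l1.sX, by rintro (h | h); exacts [l1.sZ h, h1 h]⟩ c2 ⟨l2.sX, by rintro (h | h); exacts [h2 h, l2.sZ h]⟩).reach
    hr' (h.cYb v hvT b (Or.inr rfl)).reach e1 ec.symm ec' e ?_ ?_ ?_ ?_ ?_ hd (dXT.mono_left l1.sub) ?_
    (dXT.mono_left Set.sdiff_subset) (dXT.mono_left l2.sub) (by simpa using h.aW) (l1.sub.trans h.XW)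
    (Set.sdiff_subset.trans h.XW) (l2.sub.trans h.XW) (Set.union_subset h.YW (by simpa using h.bW))).le (by omega)
  · rw [Set.disjoint_singleton_left]; exact fun hh => h.aX (l1.sub hh)
  · rw [Set.disjoint_singleton_left]; exact fun hh => h.aX hh.1
  · rw [Set.disjoint_singleton_left]; exact fun hh => h.aX (l2.sub hh)
  · rw [Set.disjoint_singleton_left]; rintro (hh | hh)
    · exact h.aY hh
    · exact h.ab hh
  · exact Set.disjoint_sdiff_right.mono_left Set.subset_union_left
  · exact Set.disjoint_sdiff_left.mono_right Set.subset_union_right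

theorem Setup.w2 {S K : Set V} {s y : V} (h : Setup G W a b X Y D L) (l1 : Leaf G X c1 Z1 L) 
    (lK : Leaf G Y s K L) (hyK : y ∉ K) (hyY : y ∈ Y) (eb : G.Adj b y)
    (hS : Conn G S a c1) (hSsub : S ⊆ X ∪ {a}) (hSd : Disjoint S Z1)
    (hcr : ∃ u ∈ K, ∃ v ∈ Z1, G.Adj u v) :
    Reach G W a b (2 * L + 4) := by
  obtain ⟨u, hu, v, hv, e⟩ := hcr
  obtain ⟨c, hc, ec, hr⟩ := l1.lens v hv
  obtain ⟨c', hc', ec', hr'⟩ := lK.lens u hu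
  have hR := leaf_rest h.cY lK.sX lK.sZ lK.cl
  have dSY : Disjoint S Y := by
    rw [Set.disjoint_left]
    intro x hx hy
    rcases hSsub hx with h' | rfl
    · exact Set.disjoint_left.1 h.dXY h' hy
    · exact h.aY hy
  refine (chain5 (W := W) hS.reach hr hr'.symm (hR s ⟨lK.sX, lK.sZ⟩ y ⟨hyY, hyK⟩).reach
    (Conn.refl (G := G) (Set.mem_singleton b)).reach ec e.symm ec'.symm eb.symm hSd
    (dSY.mono_right lK.sub) (dSY.mono_right Set.sdiff_subset) ?_ (h.dXY.mono l1.sub lK.sub)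
    (h.dXY.mono l1.sub Set.sdiff_subset) ?_ Set.disjoint_sdiff_right ?_ ?_
    (hSsub.trans (Set.union_subset h.XW (by simpa using h.aW))) (l1.sub.trans h.XW) (lK.sub.trans h.YW)
    (Set.sdiff_subset.trans h.YW) (by simpa using h.bW)).le (by omega)
  · rw [Set.disjoint_singleton_right]; intro hh
    rcases hSsub hh with h' | h'
    · exact h.bX h'
    · exact h.ab h'.symm
  · rw [Set.disjoint_singleton_right]; exact fun hh => h.bX (l1.sub hh)
  · rw [Set.disjoint_singleton_right]; exact fun hh => h.bY (lK.sub hh)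
  · rw [Set.disjoint_singleton_right]; exact fun hh => h.bY hh.1

theorem Setup.caseB [Finite V] (h : Setup G W a b X Y D L) (hX : ¬ ∀ w, Connd G (X \ {w})) :
    Reach G W a b (2 * L + 4) := by
  unfold Connd at hX
  push Not at hX
  obtain ⟨w, u, hu, v, hv, huv⟩ := hX
  have hwX : w ∈ X := by
    by_contra hw
    rw [Set.sdiff_singleton_eq_self hw] at hu hv huv
    exact huv (h.cX u hu v hv)
  have mk : ∀ u ∈ X \ {w}, ∃ s' Z', Z' ⊆ cmp G (X \ {w}) u ∧ (s' ∈ cmp G (X \ {w}) u ∨ s' = w) ∧ Leaf G X s' Z' L := by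
    intro u hu
    refine exists_leaf h.ih h.hD h.hL h.XW ⟨a, h.aW, h.aX⟩ h.degX w (cmp G (X \ {w}) u)
      (fun x hx => (cmp_sub hx).1) hwX (fun hx => (cmp_sub hx).2 rfl) ⟨u, .refl hu⟩ ?_
    intro z hz v hv e
    by_cases hvw : v = w
    · exact Or.inr hvw
    · exact Or.inl (cmp_closed hz ⟨hv, hvw⟩ e)
  obtain ⟨c1, Z1, hZ1, hc1, l1⟩ := mk u hu
  obtain ⟨c2, Z2, hZ2, hc2, l2⟩ := mk v hv
  have hdc : ∀ x, x ∈ cmp G (X \ {w}) u → x ∉ cmp G (X \ {w}) v := fun x hx hx' =>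
    huv (Conn.trans hx (Conn.symm hx'))
  have hwc : ∀ u, w ∉ cmp G (X \ {w}) u := fun u hx => (cmp_sub hx).2 rfl
  have d12 : Disjoint Z1 Z2 := by
    rw [Set.disjoint_left]; exact fun x hx hx' => hdc x (hZ1 hx) (hZ2 hx')
  have h1 : c1 ∉ Z2 := by
    intro hh
    rcases hc1 with h' | h'
    · exact hdc _ h' (hZ2 hh)
    · exact hwc v (h' ▸ hZ2 hh)
  have h2 : c2 ∉ Z1 := by
    intro hh
    rcases hc2 with h' | h'
    · exact hdc _ (hZ1 hh) h'
    · exact hwc u (h' ▸ hZ1 hh)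
  by_cases ha1 : ∃ z ∈ Z1, G.Adj a z
  · exact h.w1 l1 l2 d12 h1 h2 ha1
  by_cases ha2 : ∃ z ∈ Z2, G.Adj a z
  · exact h.w1 l2 l1 d12.symm h2 h1 ha2
  push Not at ha1 ha2
  have hR := h.rest2 l1 l2 h2
  set R := X \ (Z1 ∪ Z2) with hRdef
  have c1R : c1 ∈ R := ⟨l1.sX, by rintro (h | h); exacts [l1.sZ h, h1 h]⟩
  have c2R : c2 ∈ R := ⟨l2.sX, by rintro (h | h); exacts [h2 h, l2.sZ h]⟩
  obtain ⟨x, hx, eax⟩ := h.adjX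
  have hxR : x ∈ R := ⟨hx, by rintro (h | h); exacts [ha1 x h eax, ha2 x h eax]⟩
  have cS : Connd G (R ∪ {a}) := hR.union (singleton_connd a) hxR rfl eax.symm
  have hRX : R ⊆ X := Set.sdiff_subset
  have aR : a ∉ R := fun hh => h.aX (hRX hh)
  have dS : ∀ Z : Set V, Z ⊆ X → Z ⊆ Z1 ∪ Z2 → Disjoint (R ∪ {a}) Z := by
    intro Z hZX hZ
    rw [Set.disjoint_left]
    rintro x (hx | rfl) hxZ
    · exact hx.2 (hZ hxZ)
    · exact h.aX (hZX hxZ)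
  have dT : ∀ Z : Set V, Z ⊆ X → Disjoint (Y ∪ {b}) Z := by
    intro Z hZX
    rw [Set.disjoint_left]
    rintro x (hx | rfl) hxZ
    · exact Set.disjoint_left.1 h.dXY (hZX hxZ) hx
    · exact h.bX (hZX hxZ)
  by_cases hcross : ∃ r ∈ R ∪ {a}, ∃ r' ∈ Y ∪ {b}, G.Adj r r' ∧ ¬ (r = a ∧ r' = b)
  · refine Good.final (S := R ∪ {a}) (T := Y ∪ {b}) (Z1 := Z1) (Z2 := Z2) (c1 := c1) (c2 := c2) ?_
    exact
    { star := h.star, ne1 := l1.ne, ne2 := l2.ne, lens1 := l1.lens, lens2 := l2.lens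
      SW := Set.union_subset (hRX.trans h.XW) (by simpa using h.aW)
      TW := Set.union_subset h.YW (by simpa using h.bW)
      Z1W := l1.sub.trans h.XW
      Z2W := l2.sub.trans h.XW
      un := by
        intro x hx
        rcases h.un x hx with h' | h' | h' | h'
        · exact Or.inl (Or.inr h')
        · exact Or.inr (Or.inl (Or.inr h'))
        · by_cases hz : x ∈ Z1 ∪ Z2
          · exact Or.inr (Or.inr hz)
          · exact Or.inl (Or.inl ⟨h', hz⟩)
        · exact Or.inr (Or.inl (Or.inl h'))
      dST := by
        rw [Set.disjoint_union_left]
        refine ⟨(dT R hRX).symm, ?_⟩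
        rw [Set.disjoint_singleton_left]
        rintro (hh | hh)
        · exact h.aY hh
        · exact h.ab hh
      dS1 := dS _ l1.sub Set.subset_union_left
      dS2 := dS _ l2.sub Set.subset_union_right
      dT1 := dT _ l1.sub
      dT2 := dT _ l2.sub
      d12 := d12
      cS := cS
      cT := h.cYb
      aS := Or.inr rfl
      c1S := Or.inl c1R
      c2S := Or.inl c2R
      bT := Or.inr rfl
      c12 := (hR c1 c1R c2 c2R).mono fun x hx => ⟨Or.inl hx, by rintro rfl; exact aR hx⟩
      z1S := by
        rintro z hz v (hv | rfl) e
        · rcases l1.cl z hz v hv.1 e with h' | h'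
          · exact absurd (Or.inl h') hv.2
          · exact h'
        · exact absurd e.symm (ha1 z hz)
      z2S := by
        rintro z hz v (hv | rfl) e
        · rcases l2.cl z hz v hv.1 e with h' | h'
          · exact absurd (Or.inr h') hv.2
          · exact h'
        · exact absurd e.symm (ha2 z hz)
      z12 := by
        intro z hz v hv e
        rcases l1.cl z hz v (l2.sub hv) e with h' | h'
        · exact Set.disjoint_left.1 d12 h' hv
        · rw [h'] at hv; exact h1 hv
      cross := hcross }
  · push Not at hcross
    obtain ⟨y, hy, eby⟩ := h.adjY
    have hne : (G.neighborSet y ∩ Y).Nonempty := by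
      rw [← Set.ncard_pos (Set.toFinite _)]; have := h.degY y hy; have := h.hD; omega
    obtain ⟨y2, hy2, hy2Y⟩ := hne
    have hy2y : y2 ≠ y := by rintro rfl; exact G.loopless.irrefl _ hy2
    obtain ⟨s, K, hKs, -, lK⟩ := exists_leaf h.ih h.hD h.hL h.YW ⟨a, h.aW, h.aY⟩ h.degY y (Y \ {y})
      Set.sdiff_subset hy (fun hh => hh.2 rfl) ⟨y2, hy2Y, hy2y⟩ (by
        intro z hz v hv e
        by_cases hvy : v = y
        · exact Or.inr hvy
        · exact Or.inl ⟨hv, hvy⟩)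
    have hyK : y ∉ K := fun hh => (hKs hh).2 rfl
    obtain ⟨u, hu, v, hv, hvK, hvs, hvb, e⟩ := h.star K (by
      have := h.swap.memK lK.sub
      rwa [Set.pair_comm] at this) lK.ne (by
      have := h.swap.neH lK.sub
      rwa [Set.pair_comm] at this) s b
    have hub : u ≠ b := by rintro rfl; exact h.bY (lK.sub hu)
    have noS : v ∉ R ∪ {a} := by
      intro hvS
      exact hub (hcross v hvS u (Or.inl (lK.sub hu)) e.symm).2
    have hSs : R ∪ {a} ⊆ X ∪ {a} := Set.union_subset_union_left _ Set.sdiff_subset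
    rcases h.un v hv with rfl | rfl | h' | h'
    · exact absurd (Or.inr rfl) noS
    · exact absurd rfl hvb
    · by_cases hz1 : v ∈ Z1
      · exact h.w2 l1 lK hyK hy eby (cS a (Or.inr rfl) c1 (Or.inl c1R)) hSs
          (dS Z1 l1.sub Set.subset_union_left) ⟨u, hu, v, hz1, e⟩
      · by_cases hz2 : v ∈ Z2
        · exact h.w2 l2 lK hyK hy eby (cS a (Or.inr rfl) c2 (Or.inl c2R)) hSs
            (dS Z2 l2.sub Set.subset_union_right) ⟨u, hu, v, hz2, e⟩
        · exact absurd (Or.inl ⟨h', by rintro (hh | hh); exacts [hz1 hh, hz2 hh]⟩) noS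
    · rcases lK.cl u hu v h' e with hh | hh
      · exact absurd hh hvK
      · exact absurd hh hvs

end caseB
end SP

namespace SP

section caseA
variable {V : Type*} {G : SimpleGraph V} {W X Y : Set V} {a b : V} {D L : ℕ}

theorem Setup.flip (h : Setup G W a b X Y D L) (h1 : ∃ y ∈ Y, G.Adj a y) (h2 : ∃ x ∈ X, G.Adj b x) :
    Setup G W a b Y X D L where
  star := h.star
  ih := h.ih
  hD := h.hD
  hL := h.hL
  ab := h.ab
  aW := h.aW
  bW := h.bW
  XW := h.YW
  YW := h.XW
  aX := h.aY
  bX := h.bY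
  aY := h.aX
  bY := h.bX
  un x hx := by have := h.un x hx; tauto
  dXY := h.dXY.symm
  cX := h.cY
  cY := h.cX
  degX := h.degY
  degY := h.degX
  adjX := h1
  adjY := h2

theorem Setup.two [Finite V] (h : Setup G W a b X Y D L) {u v : V} (huv : ∀ x ∈ X, x = u ∨ x = v) (hu : u ∈ X) :
    L = 0 := by
  apply h.hL
  refine (h.degX u hu).trans ?_
  refine (Set.ncard_le_ncard (t := {v}) ?_ (Set.toFinite _)).trans (by simp)
  rintro z ⟨hz, hzX⟩
  rcases huv z hzX with rfl | rfl
  · exact absurd hz (G.loopless.irrefl _)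
  · rfl

theorem Setup.nbr [Finite V] (h : Setup G W a b X Y D L) {u : V} (hu : u ∈ X) : ∃ v ∈ X, G.Adj u v ∧ v ≠ u := by
  have hne : (G.neighborSet u ∩ X).Nonempty := by
    rw [← Set.ncard_pos (Set.toFinite _)]; have := h.degX u hu; have := h.hD; omega
  obtain ⟨v, hv, hvX⟩ := hne
  exact ⟨v, hvX, hv, by rintro rfl; exact G.loopless.irrefl _ hv⟩

theorem Setup.reachX [Finite V] (h : Setup G W a b X Y D L) (hX : ∀ w, Connd G (X \ {w})) {u v : V} (hu : u ∈ X)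
    (hv : v ∈ X) (huv : u ≠ v) : Reach G X u v (L + 1) := by
  by_cases h3 : ∃ x ∈ X, x ≠ u ∧ x ≠ v
  · refine (h.ih X h.XW (by rintro rfl; exact h.aX h.aW) u hu v hv huv ?_ h3
      (fun v hv _ _ => h.degX v hv)).le (by omega)
    intro w x hx hxw
    by_cases hwu : w = u
    · exact ⟨v, Or.inr rfl, hX w x ⟨hx, hxw⟩ v ⟨hv, by rintro rfl; exact huv hwu.symm⟩⟩
    · exact ⟨u, Or.inl rfl, hX w x ⟨hx, hxw⟩ u ⟨hu, fun hh => hwu hh.symm⟩⟩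
  · push Not at h3
    have h3' : ∀ x ∈ X, x = u ∨ x = v := fun x hx => or_iff_not_imp_left.2 (h3 x hx)
    have hL := h.two h3' hu
    obtain ⟨z, hz, e, hzu⟩ := h.nbr hu
    have : z = v := (h3' z hz).resolve_left hzu
    subst this
    subst hL
    exact ⟨1, le_rfl, R.cons hu e (R.nil ⟨hv, hzu⟩)⟩

theorem Setup.win [Finite V] (h : Setup G W a b X Y D L) (hX : ∀ w, Connd G (X \ {w}))
    (hY : ∀ w, Connd G (Y \ {w})) (hn : ¬ Reach G W a b (2 * L + 4)) {x x' y y' : V} (hx : x ∈ X)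
    (hax : G.Adj a x) (hx' : x' ∈ X) (hy' : y' ∈ Y) (e : G.Adj x' y') (hy : y ∈ Y) (hby : G.Adj b y) :
    x' = x ∨ y' = y := by
  by_contra hc
  push Not at hc
  apply hn
  have r1 := h.reachX hX hx hx' hc.1.symm
  have r2 := h.swap.reachX hY hy' hy hc.2
  have ra := (Conn.refl (G := G) (Set.mem_singleton a)).reach
  have rb := (Conn.refl (G := G) (Set.mem_singleton b)).reach
  have g := ((ra.join hax r1 (by simpa using h.aX)).join e r2 (by
    rw [Set.disjoint_union_left]; exact ⟨by simpa using h.aY, h.dXY⟩)).join hby.symm rb (by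
    simp only [Set.disjoint_singleton_right, Set.mem_union, Set.mem_singleton_iff]
    rintro ((hh | hh) | hh)
    exacts [h.ab hh.symm, h.bX hh, h.bY hh])
  refine (g.mono ?_).le (by omega)
  have := h.aW; have := h.bW; have := h.XW; have := h.YW
  simp [*, Set.insert_subset_iff]

theorem Setup.starY (h : Setup G W a b X Y D L) {K : Set V} (hK : K ⊆ Y) (hne : K.Nonempty) (s t : V) :
    ∃ u ∈ K, ∃ v ∈ W, v ∉ K ∧ v ≠ s ∧ v ≠ t ∧ G.Adj u v :=
  h.swap.star K (h.swap.memK hK) hne (h.swap.neH hK) s t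

theorem Setup.uniq [Finite V] (h : Setup G W a b X Y D L) (hX : ∀ w, Connd G (X \ {w}))
    (hY : ∀ w, Connd G (Y \ {w})) (hn : ¬ Reach G W a b (2 * L + 4)) {x x2 : V} (hx : x ∈ X)
    (hax : G.Adj a x) (hx2 : x2 ∈ X) (hax2 : G.Adj a x2) : x = x2 := by
  by_contra hc
  have key : ∀ y ∈ Y, G.Adj b y → ∀ x' ∈ X, ∀ y' ∈ Y, G.Adj x' y' → y' = y := by
    intro y hy hby x' hx' y' hy' e
    have h1 := h.win hX hY hn hx hax hx' hy' e hy hby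
    have h2 := h.win hX hY hn hx2 hax2 hx' hy' e hy hby
    rcases h1 with h1 | h1
    · rcases h2 with h2 | h2
      · exact absurd (h1.symm.trans h2) hc
      · exact h2
    · exact h1
  obtain ⟨y, hy, hby⟩ := h.adjY
  obtain ⟨y2, hy2, -, hne⟩ := h.swap.nbr hy
  obtain ⟨u, hu, v, hv, hvK, hvs, hvt, e⟩ := h.starY (K := Y \ {y}) Set.sdiff_subset ⟨y2, hy2, hne⟩ y a
  have hbu : G.Adj b u := by
    rcases h.un v hv with h' | h' | h' | h'
    · exact absurd h' hvt
    · exact h' ▸ e.symm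
    · exact absurd (key y hy hby v h' u hu.1 e.symm) hu.2
    · exact absurd ⟨h', hvs⟩ hvK
  obtain ⟨p, hp, q, hq, hqK, hqs, hqt, e'⟩ := h.starY (K := Y) subset_rfl ⟨y, hy⟩ a b
  rcases h.un q hq with h' | h' | h' | h'
  · exact hqs h'
  · exact hqt h'
  · have h1 := key y hy hby q h' p hp e'.symm
    have h2 := key u hu.1 hbu q h' p hp e'.symm
    exact hu.2 (h2.symm.trans h1)
  · exact hqK h'

theorem Setup.second [Finite V] (h : Setup G W a b X Y D L) (hX : ∀ w, Connd G (X \ {w}))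
    (hY : ∀ w, Connd G (Y \ {w})) (hn : ¬ Reach G W a b (2 * L + 4)) {x y : V} (hx : x ∈ X)
    (hax : G.Adj a x) (hy : y ∈ Y) (hby : G.Adj b y) : ∃ x' ∈ X, x' ≠ x ∧ G.Adj b x' := by
  obtain ⟨x2, hx2, -, hne⟩ := h.nbr hx
  obtain ⟨u, hu, v, hv, hvK, hvs, hvt, e⟩ := h.swap.starY (K := X \ {x}) Set.sdiff_subset ⟨x2, hx2, hne⟩ x y
  refine ⟨u, hu.1, hu.2, ?_⟩
  rcases h.un v hv with h' | h' | h' | h'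
  · rw [h'] at e
    exact absurd (h.uniq hX hY hn hu.1 e.symm hx hax) hu.2
  · exact h' ▸ e.symm
  · exact absurd ⟨h', hvs⟩ hvK
  · rcases h.win hX hY hn hx hax hu.1 h' e hy hby with hh | hh
    · exact absurd hh hu.2
    · exact absurd hh hvt

theorem Setup.caseA [Finite V] (h : Setup G W a b X Y D L) (hX : ∀ w, Connd G (X \ {w}))
    (hY : ∀ w, Connd G (Y \ {w})) : Reach G W a b (2 * L + 4) := by
  by_contra hn
  have hn' : ¬ Reach G W b a (2 * L + 4) := fun hh => hn hh.symm
  obtain ⟨x, hx, hax⟩ := h.adjX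
  obtain ⟨y, hy, hby⟩ := h.adjY
  obtain ⟨x', hx', hne, hbx'⟩ := h.second hX hY hn hx hax hy hby
  obtain ⟨y', hy', hney, hay'⟩ := h.swap.second hY hX hn' hy hby hx hax
  have f := h.flip ⟨y', hy', hay'⟩ ⟨x', hx', hbx'⟩
  have edge : ∀ u ∈ X, ∀ v ∈ Y, G.Adj u v → (u = x ∧ v = y') ∨ (u = x' ∧ v = y) := by
    intro u hu v hv e
    rcases h.win hX hY hn hx hax hu hv e hy hby with h1 | h1
    · rcases f.win hY hX hn hy' hay' hv hu e.symm hx' hbx' with h2 | h2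
      · exact Or.inl ⟨h1, h2⟩
      · exact absurd (h2.symm.trans h1) hne
    · rcases f.win hY hX hn hy' hay' hv hu e.symm hx' hbx' with h2 | h2
      · exact absurd (h2.symm.trans h1) hney
      · exact Or.inr ⟨h2, h1⟩
  have hBX : ∀ u ∈ X, G.Adj b u → u = x' := fun u hu e => f.swap.uniq hX hY hn' hu e hx' hbx'
  have h2 : ∀ u ∈ X, u = x ∨ u = x' := by
    by_contra hc
    push Not at hc
    obtain ⟨u0, hu0, hu0x, hu0x'⟩ := hc
    obtain ⟨u, hu, v, hv, hvK, hvs, hvt, e⟩ := h.swap.starY (K := X \ {x, x'}) Set.sdiff_subset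
      ⟨u0, hu0, by simp [hu0x, hu0x']⟩ x x'
    have hux : u ≠ x := fun hh => hu.2 (Or.inl hh)
    have hux' : u ≠ x' := fun hh => hu.2 (Or.inr hh)
    rcases h.un v hv with h' | h' | h' | h'
    · rw [h'] at e
      exact hux (h.uniq hX hY hn hu.1 e.symm hx hax)
    · rw [h'] at e
      exact hux' (hBX u hu.1 e.symm)
    · exact hvK ⟨h', by simp [hvs, hvt]⟩
    · rcases edge u hu.1 v h' e with hh | hh
      · exact hux hh.1
      · exact hux' hh.1
  have hL := h.two h2 hx
  obtain ⟨u, hu, v, hv, hvK, hvs, hvt, e⟩ := h.swap.starY (K := {x}) (by simpa using hx) ⟨x, rfl⟩ x' a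
  obtain rfl : u = x := hu
  have hxy' : G.Adj u y' := by
    rcases h.un v hv with h' | h' | h' | h'
    · exact absurd h' hvt
    · rw [h'] at e
      exact absurd (hBX u hx e.symm).symm hne
    · rcases h2 v h' with hh | hh
      · exact absurd hh hvK
      · exact absurd hh hvs
    · rcases edge u hx v h' e with hh | hh
      · exact hh.2 ▸ e
      · exact absurd hh.1.symm hne
  apply hn
  have r2 := h.swap.reachX hY hy' hy hney
  have ra := (Conn.refl (G := G) (Set.mem_singleton a)).reach
  have ru := (Conn.refl (G := G) (Set.mem_singleton u)).reach
  have rb := (Conn.refl (G := G) (Set.mem_singleton b)).reach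
  have hau : a ≠ u := by rintro rfl; exact h.aX hx
  have hbu : b ≠ u := by rintro rfl; exact h.bX hx
  have huY : u ∉ Y := Set.disjoint_left.1 h.dXY hx
  have g := ((ra.join hax ru (by simpa using hau)).join hxy' r2 (by
    rw [Set.disjoint_union_left]; exact ⟨by simpa using h.aY, by simpa using huY⟩)).join hby.symm rb (by
    simp only [Set.disjoint_singleton_right, Set.mem_union, Set.mem_singleton_iff]
    rintro ((hh | hh) | hh)
    exacts [h.ab hh.symm, hbu hh, h.bY hh])
  refine (g.mono ?_).le (by omega)
  have := h.aW; have := h.bW; have := h.XW hx; have := h.YW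
  simp [*, Set.insert_subset_iff]

theorem Setup.done [Finite V] (h : Setup G W a b X Y D L) : Reach G W a b (2 * L + 4) := by
  by_cases hX : ∀ w, Connd G (X \ {w})
  · by_cases hY : ∀ w, Connd G (Y \ {w})
    · exact h.caseA hX hY
    · exact (h.swap.caseB hY).symm
  · exact h.caseB hX

end caseA
end SP

namespace SP

section core
variable {V : Type*} {G : SimpleGraph V} {W K : Set V} {a b s t : V} {D L : ℕ}

theorem Cut.symm (h : Cut G W a b) : Cut G W b a := by
  intro w v hv hvw
  obtain ⟨e, he, hc⟩ := h w v hv hvw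
  exact ⟨e, he.symm, hc⟩

theorem sew {A1 A2 : Set V} {n : ℕ} (h1 : Conn G A1 a s) (h2 : Conn G A2 t b)
    (h : Reach G (K ∪ {s, t}) s t n) (hd : Disjoint A1 A2) (hA1 : A1 ⊆ W \ K) (hA2 : A2 ⊆ W \ K)
    (hW : K ∪ {s, t} ⊆ W) : Reach G W a b n := by
  have g1 := h1.reach.glue h (by
    rintro x ⟨hx, hxK | rfl | rfl⟩
    · exact absurd hxK (hA1 hx).2
    · rfl
    · exact absurd h2.left (Set.disjoint_left.1 hd hx))
  have g2 := g1.glue h2.reach (by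
    rintro x ⟨hx | hxK | rfl | rfl, hx2⟩
    · exact absurd hx2 (Set.disjoint_left.1 hd hx)
    · exact absurd hxK (hA2 hx2).2
    · exact absurd hx2 (Set.disjoint_left.1 hd h1.right)
    · rfl)
  refine (g2.mono ?_).le (by omega)
  exact Set.union_subset (Set.union_subset (hA1.trans Set.sdiff_subset) hW) (hA2.trans Set.sdiff_subset)

theorem star_of [Finite V] (hcut : Cut G W a b) (aW : a ∈ W) (bW : b ∈ W) (ab : a ≠ b)
    (hdeg : ∀ v ∈ W, v ≠ a → v ≠ b → D ≤ (G.neighborSet v ∩ W).ncard)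
    (hn : ¬ Reach G W a b (L + 2)) (hIH : IHat G W D L) : Star G W a b := by
  intro K hK hne hneH s0 t0
  by_contra hc
  push Not at hc
  have aK : a ∉ K := fun hh => (hK hh).2 (Or.inl rfl)
  have bK : b ∉ K := fun hh => (hK hh).2 (Or.inr rfl)
  have pick : ∀ r, ∃ r' ∈ W \ K, ∀ v ∈ W \ K, v = r → v = r' := by
    intro r
    by_cases hr : r ∈ W \ K
    · exact ⟨r, hr, fun _ _ h => h⟩
    · exact ⟨a, ⟨aW, aK⟩, fun v hv h => absurd (h ▸ hv) hr⟩
  have : ∃ s ∈ W \ K, ∃ t ∈ W \ K, s ≠ t ∧ ∀ u ∈ K, ∀ v ∈ W, v ∉ K → G.Adj u v → v = s ∨ v = t := by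
    obtain ⟨s, hs, hs'⟩ := pick s0
    obtain ⟨t, ht, ht'⟩ := pick t0
    have hh : ∀ u ∈ K, ∀ v ∈ W, v ∉ K → G.Adj u v → v = s ∨ v = t := by
      intro u hu v hv hvK e
      by_cases h1 : v = s0
      · exact Or.inl (hs' v ⟨hv, hvK⟩ h1)
      · by_cases h2 : v = t0
        · exact Or.inr (ht' v ⟨hv, hvK⟩ h2)
        · exact absurd e (hc u hu v hv hvK h1 h2)
    by_cases hst : s = t
    · subst hst
      by_cases hsa : s = a
      · refine ⟨s, hs, b, ⟨bW, bK⟩, by rw [hsa]; exact ab, fun u hu v hv hvK e => ?_⟩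
        have := hh u hu v hv hvK e; tauto
      · refine ⟨s, hs, a, ⟨aW, aK⟩, hsa, fun u hu v hv hvK e => ?_⟩
        have := hh u hu v hv hvK e; tauto
    · exact ⟨s, hs, t, ht, hst, hh⟩
  obtain ⟨s, hs, t, ht, hst, hout⟩ := this
  have hKW : K ⊆ W := fun x hx => (hK hx).1
  have hWs : K ∪ {s, t} ⊆ W := by
    rintro x (hx | rfl | rfl)
    exacts [hKW hx, hs.1, ht.1]
  have hWne : K ∪ {s, t} ≠ W := by
    intro he
    apply hneH
    refine hK.antisymm fun x hx => ?_
    have ha : a = s ∨ a = t := by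
      have := aW; rw [← he] at this
      exact this.resolve_left aK
    have hb : b = s ∨ b = t := by
      have := bW; rw [← he] at this
      exact this.resolve_left bK
    have h1 := hx.1
    rw [← he] at h1
    rcases h1 with h1 | h1
    · exact h1
    · exfalso
      apply hx.2
      have h1 : x = s ∨ x = t := h1
      show x = a ∨ x = b
      rcases ha with rfl | rfl <;> rcases hb with rfl | rfl <;> tauto
  obtain ⟨v0, hv0⟩ := hne
  have hreach : Reach G (K ∪ {s, t}) s t (L + 2) := by
    refine hIH _ hWs hWne s (Or.inr (Or.inl rfl)) t (Or.inr (Or.inr rfl)) hst ?_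
      ⟨v0, Or.inl hv0, by rintro rfl; exact hs.2 hv0, by rintro rfl; exact ht.2 hv0⟩ ?_
    · rintro w v (hv | rfl | rfl) hvw
      · obtain ⟨e, he, hcn⟩ := hcut w v (hKW hv) hvw
        have heK : e ∉ K := by rcases he with rfl | rfl <;> assumption
        obtain ⟨x, hx, y, hy, hyK, exy, hcx⟩ := hcn.exit K hv heK
        have hyst := hout x hx y hy.1 hyK exy
        refine ⟨y, hyst, Conn.step (hcx.mono ?_) exy ⟨Or.inr hyst, hy.2⟩⟩
        rintro z ⟨⟨_, hz⟩, hzK⟩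
        exact ⟨Or.inl hzK, hz⟩
      · exact ⟨v, Or.inl rfl, .refl ⟨Or.inr (Or.inl rfl), hvw⟩⟩
      · exact ⟨v, Or.inr rfl, .refl ⟨Or.inr (Or.inr rfl), hvw⟩⟩
    · rintro v (hv | rfl | rfl) hvs hvt
      · refine (hdeg v (hKW hv) (by rintro rfl; exact aK hv) (by rintro rfl; exact bK hv)).trans
          (Set.ncard_le_ncard ?_ (Set.toFinite _))
        rintro z ⟨hz, hzW⟩
        refine ⟨hz, ?_⟩
        by_cases hzK : z ∈ K
        · exact Or.inl hzK
        · exact Or.inr (hout v hv z hzW hzK hz)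
      · exact absurd rfl hvs
      · exact absurd rfl hvt
  have back : ∀ w, ∀ v ∈ K, v ≠ w → ∃ e, (e = a ∨ e = b) ∧ ∃ z, (z = s ∨ z = t) ∧ Conn G ((W \ K) \ {w}) e z := by
    intro w v hv hvw
    obtain ⟨e, he, hcn⟩ := hcut w v (hKW hv) hvw
    have heK : e ∉ K := by rcases he with rfl | rfl <;> assumption
    obtain ⟨x, hx, y, hy, hyK, exy, hcx⟩ := hcn.symm.exit Kᶜ heK (fun hh => hh hv)
    refine ⟨e, he, x, hout y (not_not.1 hyK) x hcx.right.1.1 hx exy.symm, hcx.mono ?_⟩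
    rintro z ⟨⟨h1, h2⟩, h3⟩
    exact ⟨⟨h1, h3⟩, h2⟩
  have hv0a : v0 ≠ a := by rintro rfl; exact aK hv0
  have hv0b : v0 ≠ b := by rintro rfl; exact bK hv0
  have hv0s : v0 ≠ s := by rintro rfl; exact hs.2 hv0
  have hv0t : v0 ≠ t := by rintro rfl; exact ht.2 hv0
  have h1 : ∃ u ∈ ({a} : Set V), ∃ v ∈ ({s} : Set V) ∪ {t}, Conn G (W \ K) u v := by
    obtain ⟨e, he, z, hz, hcn⟩ := back b v0 hv0 hv0b
    exact ⟨e, he.resolve_right hcn.left.2, z, hz, hcn.mono Set.sdiff_subset⟩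
  have h2 : ∃ u ∈ ({b} : Set V), ∃ v ∈ ({s} : Set V) ∪ {t}, Conn G (W \ K) u v := by
    obtain ⟨e, he, z, hz, hcn⟩ := back a v0 hv0 hv0a
    exact ⟨e, he.resolve_left hcn.left.2, z, hz, hcn.mono Set.sdiff_subset⟩
  have h3 : ∃ u ∈ ({a} : Set V) ∪ {b}, ∃ v ∈ ({s} : Set V), Conn G (W \ K) u v := by
    obtain ⟨e, he, z, hz, hcn⟩ := back t v0 hv0 hv0t
    exact ⟨e, he, z, hz.resolve_right hcn.right.2, hcn.mono Set.sdiff_subset⟩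
  have h4 : ∃ u ∈ ({a} : Set V) ∪ {b}, ∃ v ∈ ({t} : Set V), Conn G (W \ K) u v := by
    obtain ⟨e, he, z, hz, hcn⟩ := back s v0 hv0 hv0s
    exact ⟨e, he, z, hz.resolve_left hcn.right.2, hcn.mono Set.sdiff_subset⟩
  have hw : ∀ w, ∃ u ∈ ({a} : Set V) ∪ {b}, ∃ v ∈ ({s} : Set V) ∪ {t}, Conn G ((W \ K) \ {w}) u v := by
    intro w
    by_cases hwv : v0 = w
    · have : w ∉ W \ K := by rw [← hwv]; exact fun hh => hh.2 hv0
      rw [Set.sdiff_singleton_eq_self this]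
      obtain ⟨u, hu, v, hv, hcn⟩ := h1
      exact ⟨u, Or.inl hu, v, hv, hcn⟩
    · obtain ⟨e, he, z, hz, hcn⟩ := back w v0 hv0 hwv
      exact ⟨e, he, z, hz, hcn⟩
  obtain ⟨A1, A2, hd, hA1, hA2, _, rfl, _, rfl, _, rfl, _, rfl, hh | hh⟩ := link (W \ K) {a} {b} {s} {t} h1 h2 h3 h4 hw
  · exact hn (sew hh.1 hh.2.symm hreach hd hA1 hA2 hWs)
  · rw [Set.pair_comm] at hreach hWs
    exact hn (sew hh.1 hh.2.symm hreach.symm hd hA1 hA2 hWs)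

theorem cut_adj (hcut : Cut G W a b) (ab : a ≠ b) {v : V} (hv : v ∈ W) (hva : v ≠ a) (hvb : v ≠ b) :
    ∃ x, Conn G (W \ {a, b}) v x ∧ G.Adj a x := by
  obtain ⟨e, he, hc⟩ := hcut b v hv hvb
  have hea : e = a := he.resolve_right hc.right.2
  subst hea
  have hvH : v ∈ W \ {e, b} := ⟨hv, by simp [hva, hvb]⟩
  obtain ⟨x, hx, y, hy, hyK, exy, hcx⟩ := hc.exit (W \ {e, b}) hvH (fun hh => hh.2 (Or.inl rfl))
  have hye : y = e := by
    by_contra hne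
    exact hyK ⟨hy.1, by rintro (h | h); exacts [hne h, hy.2 h]⟩
  subst hye
  exact ⟨x, hcx.mono Set.inter_subset_right, exy.symm⟩

theorem base (hcut : Cut G W a b) (ab : a ≠ b) (aW : a ∈ W) (bW : b ∈ W) (h3 : ∃ v ∈ W, v ≠ a ∧ v ≠ b) :
    Reach G W a b 2 := by
  obtain ⟨v, hv, hva, hvb⟩ := h3
  obtain ⟨x, hx, eax⟩ := cut_adj hcut ab hv hva hvb
  obtain ⟨y, hy, eby⟩ := cut_adj hcut.symm ab.symm hv hvb hva
  rw [Set.pair_comm] at hy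
  have r := (hx.symm.trans hy).reach
  have ra := (Conn.refl (G := G) (Set.mem_singleton a)).reach
  have rb := (Conn.refl (G := G) (Set.mem_singleton b)).reach
  have g := (ra.join eax r (by simp)).join eby.symm rb (by simp [ab.symm])
  refine (g.mono ?_).le (by omega)
  simp [aW, bW, Set.insert_subset_iff]

def Split (G : SimpleGraph V) (k : ℕ) : Prop := ∀ (S : Set V) (x y : V), x ∈ S → y ∈ S → x ≠ y →
  ∃ X Y : Set V, X ∪ Y = S ∧ Disjoint X Y ∧ x ∈ X ∧ y ∈ Y ∧
    (∀ v ∈ X, (G.neighborSet v ∩ S).ncard ≤ (G.neighborSet v ∩ X).ncard + k) ∧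
    (∀ v ∈ Y, (G.neighborSet v ∩ S).ncard ≤ (G.neighborSet v ∩ Y).ncard + k)

theorem core_step [Finite V] {k d : ℕ} (hS : Split G k) (hcut : Cut G W a b) (ab : a ≠ b) (aW : a ∈ W) (bW : b ∈ W)
    (h3 : ∃ v ∈ W, v ≠ a ∧ v ≠ b) (hdeg : ∀ v ∈ W, v ≠ a → v ≠ b → d ≤ (G.neighborSet v ∩ W).ncard)
    (star : Star G W a b) (ih : IHat G W D L) (hD : 1 ≤ D) (hL : D ≤ 1 → L = 0) (hd : d = D + k + 2) :
    Reach G W a b (2 * L + 4) := by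
  obtain ⟨v, hv, hva, hvb⟩ := h3
  obtain ⟨x, hx, eax⟩ := cut_adj hcut ab hv hva hvb
  obtain ⟨y0, hy0, eby0⟩ := cut_adj hcut.symm ab.symm hv hvb hva
  replace hx := hx.right
  rw [Set.pair_comm] at hy0
  replace hy0 := hy0.right
  set H := W \ {a, b} with hH
  have memH : ∀ z ∈ W, z ≠ a → z ≠ b → z ∈ H := fun z hz h1 h2 => ⟨hz, by simp [h1, h2]⟩
  have Ha : ∀ z ∈ H, z ≠ a := fun z hz h => hz.2 (Or.inl h)
  have Hb : ∀ z ∈ H, z ≠ b := fun z hz h => hz.2 (Or.inr h)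
  have degH : ∀ z ∈ H, D + k ≤ (G.neighborSet z ∩ H).ncard := by
    intro z hz
    have h1 := hdeg z hz.1 (Ha z hz) (Hb z hz)
    have h2 : (G.neighborSet z ∩ W).ncard ≤ (G.neighborSet z ∩ H).ncard + ({a, b} : Set V).ncard := by
      refine (Set.ncard_le_ncard ?_ (Set.toFinite _)).trans (Set.ncard_union_le _ _)
      rintro q ⟨hq, hqW⟩
      by_cases hh : q ∈ ({a, b} : Set V)
      · exact Or.inr hh
      · exact Or.inl ⟨hq, hqW, hh⟩
    rw [Set.ncard_pair ab] at h2
    omega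
  obtain ⟨y, hy, eby, hxy⟩ : ∃ y ∈ H, G.Adj b y ∧ x ≠ y := by
    by_cases hxy : x = y0
    · have hne : (G.neighborSet x ∩ H).Nonempty := by
        rw [← Set.ncard_pos (Set.toFinite _)]; have := degH x hx; omega
      obtain ⟨z, hz, hzH⟩ := hne
      have hzx : z ≠ x := by rintro rfl; exact G.loopless.irrefl _ hz
      obtain ⟨u, hu, v, hv, hvK, hvx, hva, e⟩ := star (H \ {x}) Set.sdiff_subset ⟨z, hzH, hzx⟩
        (fun he => by
          have h1 : x ∈ H \ {x} := by rw [he]; exact hx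
          exact h1.2 rfl) x a
      have hvb : v = b := by
        by_contra hvb
        exact hvK ⟨memH v hv hva hvb, hvx⟩
      subst hvb
      exact ⟨u, hu.1, e.symm, fun h => hu.2 h.symm⟩
    · exact ⟨y0, hy0, eby0, hxy⟩
  obtain ⟨X0, Y0, hun, hdis, hx0, hy0', dX0, dY0⟩ := hS H x y hx hy hxy
  have X0H : X0 ⊆ H := by rw [← hun]; exact Set.subset_union_left
  have Y0H : Y0 ⊆ H := by rw [← hun]; exact Set.subset_union_right
  set X1 := cmp G X0 x with hX1
  have X10 : X1 ⊆ X0 := cmp_sub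
  set Y1 := H \ X1 with hY1
  have hxX1 : x ∈ X1 := Conn.refl hx0
  have hyY1 : y ∈ Y1 := ⟨hy, fun hh => Set.disjoint_left.1 hdis (X10 hh) hy0'⟩
  have degX1 : ∀ v ∈ X1, D ≤ (G.neighborSet v ∩ X1).ncard := by
    intro v hv
    have h1 := dX0 v (X10 hv)
    have h2 := degH v (X0H (X10 hv))
    have h3 : (G.neighborSet v ∩ X0).ncard ≤ (G.neighborSet v ∩ X1).ncard := by
      refine Set.ncard_le_ncard ?_ (Set.toFinite _)
      rintro q ⟨hq, hq0⟩
      exact ⟨hq, cmp_closed hv hq0 hq⟩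
    omega
  have degY1 : ∀ v ∈ Y1, D ≤ (G.neighborSet v ∩ Y1).ncard := by
    intro v hv
    have h2 := degH v hv.1
    have hv' := hv.1
    rw [← hun] at hv'
    rcases hv' with hv0 | hv0
    · have h1 := dX0 v hv0
      have h3 : (G.neighborSet v ∩ X0).ncard ≤ (G.neighborSet v ∩ Y1).ncard := by
        refine Set.ncard_le_ncard ?_ (Set.toFinite _)
        rintro q ⟨hq, hq0⟩
        exact ⟨hq, X0H hq0, fun hh => hv.2 (cmp_closed hh hv0 (show G.Adj v q from hq).symm)⟩
      omega
    · have h1 := dY0 v hv0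
      have h3 : (G.neighborSet v ∩ Y0).ncard ≤ (G.neighborSet v ∩ Y1).ncard := by
        refine Set.ncard_le_ncard ?_ (Set.toFinite _)
        rintro q ⟨hq, hq0⟩
        exact ⟨hq, Y0H hq0, fun hh => Set.disjoint_left.1 hdis (X10 hh) hq0⟩
      omega
  set Y := cmp G Y1 y with hYdef
  have YY1 : Y ⊆ Y1 := cmp_sub
  have YH : Y ⊆ H := fun z hz => (YY1 hz).1
  have hyY : y ∈ Y := Conn.refl hyY1
  have X1X : X1 ⊆ H \ Y := fun z hz => ⟨X0H (X10 hz), fun hh => (YY1 hh).2 hz⟩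
  have toX : ∀ v ∈ H \ Y, Conn G (H \ Y) v x := by
    intro v hv
    by_cases hv1 : v ∈ X1
    · exact (cmp_connd v hv1 x hxX1).mono X1X
    · have hvY1 : v ∈ Y1 := ⟨hv.1, hv1⟩
      have CY : cmp G Y1 v ⊆ H \ Y := fun z hz =>
        ⟨(cmp_sub hz).1, fun hh => hv.2 (Conn.trans hh (Conn.symm hz))⟩
      obtain ⟨u, hu, z, hz, hzK, hza, hzb, e⟩ := star (cmp G Y1 v) (fun z hz => (CY hz).1) ⟨v, Conn.refl hvY1⟩
        (fun he => by
          have h1 : x ∈ cmp G Y1 v := by rw [he]; exact hx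
          exact (cmp_sub h1).2 hxX1) a b
      have hzH := memH z hz hza hzb
      have hzX1 : z ∈ X1 := by
        by_contra hh
        exact hzK (cmp_closed hu ⟨hzH, hh⟩ e)
      exact ((Conn.comp hu).mono CY).trans ((Conn.edge (CY hu) (X1X hzX1) e).trans
        ((cmp_connd z hzX1 x hxX1).mono X1X))
  refine Setup.done (X := H \ Y) (Y := Y) (D := D) ?_
  exact
  { star := star, ih := ih, hD := hD, hL := hL, ab := ab, aW := aW, bW := bW
    XW := fun z hz => hz.1.1
    YW := fun z hz => (YH hz).1
    aX := fun hh => Ha a hh.1 rfl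
    bX := fun hh => Hb b hh.1 rfl
    aY := fun hh => Ha a (YH hh) rfl
    bY := fun hh => Hb b (YH hh) rfl
    un := by
      intro z hz
      by_cases h1 : z = a
      · exact Or.inl h1
      by_cases h2 : z = b
      · exact Or.inr (Or.inl h2)
      by_cases h3 : z ∈ Y
      · exact Or.inr (Or.inr (Or.inr h3))
      · exact Or.inr (Or.inr (Or.inl ⟨memH z hz h1 h2, h3⟩))
    dXY := Set.disjoint_sdiff_left
    cX := fun u hu v hv => (toX u hu).trans (toX v hv).symm
    cY := cmp_connd
    degX := by
      intro v hv
      by_cases hv1 : v ∈ X1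
      · exact (degX1 v hv1).trans (Set.ncard_le_ncard (Set.inter_subset_inter_right _ X1X) (Set.toFinite _))
      · refine (degY1 v ⟨hv.1, hv1⟩).trans (Set.ncard_le_ncard ?_ (Set.toFinite _))
        rintro q ⟨hq, hq1⟩
        exact ⟨hq, hq1.1, fun hh => hv.2 (cmp_closed hh ⟨hv.1, hv1⟩ (show G.Adj v q from hq).symm)⟩
    degY := by
      intro v hv
      refine (degY1 v (YY1 hv)).trans (Set.ncard_le_ncard ?_ (Set.toFinite _))
      rintro q ⟨hq, hq1⟩
      exact ⟨hq, cmp_closed hv hq1 hq⟩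
    adjX := ⟨x, X1X hxX1, eax⟩
    adjY := ⟨y, hyY, eby⟩ }

theorem core [Finite V] {k : ℕ} (hS : Split G k) (f : ℕ → ℕ) (hf1 : ∀ d ≤ k + 2, f d ≤ 2)
    (hf2 : ∀ D, f (D + k + 2) ≤ 2 * f D) (hf3 : ∀ D, 1 ≤ D → 2 ≤ f D) :
    ∀ (n : ℕ) (W : Set V) (a b : V) (d : ℕ), W.ncard = n → a ∈ W → b ∈ W → a ≠ b → Cut G W a b →
    (∃ v ∈ W, v ≠ a ∧ v ≠ b) → (∀ v ∈ W, v ≠ a → v ≠ b → d ≤ (G.neighborSet v ∩ W).ncard) →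
    Reach G W a b (f d) := by
  intro n
  induction n using Nat.strong_induction_on with
  | _ n ih =>
  intro W a b d hn aW bW ab hcut h3 hdeg
  by_cases hd : d ≤ k + 2
  · exact (base hcut ab aW bW h3).le (hf1 d hd)
  have IHa : ∀ D, 1 ≤ D → IHat G W D (f D - 2) := by
    intro D hD W' hW' hne s hs t ht hst hcut' h3' hdeg'
    have hlt : W'.ncard < n := by
      rw [← hn]; exact Set.ncard_lt_ncard (hW'.ssubset_of_ne hne) (Set.toFinite _)
    have := ih _ hlt W' s t D rfl hs ht hst hcut' h3' hdeg'
    have h2 := hf3 D hD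
    exact this.le (by omega)
  by_contra hc
  have hfd := hf3 d (by omega)
  have star := star_of (D := d) (L := f d - 2) hcut aW bW ab hdeg (by
    rwa [Nat.sub_add_cancel hfd]) (IHa d (by omega))
  obtain ⟨D, rfl⟩ : ∃ D, d = D + k + 2 := ⟨d - (k + 2), by omega⟩
  have hD : 1 ≤ D := by omega
  have := core_step hS hcut ab aW bW h3 hdeg star (IHa D hD) hD (by
    intro h; have := hf1 D (by omega); omega) rfl
  apply hc
  have h1 := hf2 D
  have h2 := hf3 D hD
  exact this.le (by omega)

end core
end SP

namespace SP

section infin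
variable {V : Type*} {G : SimpleGraph V} {A F : Set V} {a b u v : V}

theorem conn_down (h : Conn G F u v) (hF : F ⊆ A) : ∀ (hu : u ∈ A) (hv : v ∈ A),
    Conn (G.induce A) ((fun x : A => (x : V)) ⁻¹' F) ⟨u, hu⟩ ⟨v, hv⟩ := by
  induction h with
  | refl h => exact fun hu _ => .refl h
  | step h0 h1 h2 ih => exact fun hu hv => .step (ih hu (hF h0.right)) h1 h2

theorem conn_up {B : Set A} {u v : A} (h : Conn (G.induce A) B u v) :
    Conn G ((fun x : A => (x : V)) '' B) u v := by
  induction h with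
  | refl h => exact .refl ⟨_, h, rfl⟩
  | step h0 h1 h2 ih => exact .step ih h1 ⟨_, h2, rfl⟩

theorem r_up {B : Set A} {u v : A} {n : ℕ} (h : R (G.induce A) B u v n) :
    R G ((fun x : A => (x : V)) '' B) u v n := by
  induction h with
  | nil h => exact .nil ⟨_, h, rfl⟩
  | cons h1 h2 _ ih =>
    refine .cons ⟨_, h1, rfl⟩ h2 (ih.mono ?_)
    rintro _ ⟨x, hx, rfl⟩
    exact ⟨⟨x, hx.1, rfl⟩, fun hh => hx.2 (Subtype.ext hh)⟩

theorem link_set (hA : A.Finite) (U1 U2 V1 V2 : Set V)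
    (h1 : ∃ u ∈ U1, ∃ v ∈ V1 ∪ V2, Conn G A u v) (h2 : ∃ u ∈ U2, ∃ v ∈ V1 ∪ V2, Conn G A u v)
    (h3 : ∃ u ∈ U1 ∪ U2, ∃ v ∈ V1, Conn G A u v) (h4 : ∃ u ∈ U1 ∪ U2, ∃ v ∈ V2, Conn G A u v)
    (hw : ∀ w, ∃ u ∈ U1 ∪ U2, ∃ v ∈ V1 ∪ V2, Conn G (A \ {w}) u v) :
    ∃ A1 A2 : Set V, Disjoint A1 A2 ∧ A1 ⊆ A ∧ A2 ⊆ A ∧ ∃ u1 ∈ U1, ∃ u2 ∈ U2, ∃ v1 ∈ V1, ∃ v2 ∈ V2,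
      (Conn G A1 u1 v1 ∧ Conn G A2 u2 v2) ∨ (Conn G A1 u1 v2 ∧ Conn G A2 u2 v1) := by
  have : Finite A := hA
  let c : A → V := fun x => x
  have key : ∀ S T : Set V, (∃ u ∈ S, ∃ v ∈ T, Conn G A u v) →
      ∃ u ∈ c ⁻¹' S, ∃ v ∈ c ⁻¹' T, Conn (G.induce A) Set.univ u v := by
    rintro S T ⟨u, hu, v, hv, h⟩
    exact ⟨⟨u, h.left⟩, hu, ⟨v, h.right⟩, hv, (conn_down h subset_rfl h.left h.right).mono (Set.subset_univ _)⟩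
  obtain ⟨A1, A2, hd, -, -, u1, hu1, u2, hu2, v1, hv1, v2, hv2, hh⟩ := link (G := G.induce A) Set.univ (c ⁻¹' U1) (c ⁻¹' U2) (c ⁻¹' V1) (c ⁻¹' V2)
    (key _ _ h1) (key _ _ h2) (key _ _ h3) (key _ _ h4) (by
      intro w
      obtain ⟨u, hu, v, hv, h⟩ := hw w
      refine ⟨⟨u, h.left.1⟩, hu, ⟨v, h.right.1⟩, hv, (conn_down h Set.sdiff_subset h.left.1 h.right.1).mono ?_⟩
      intro z hz
      exact ⟨trivial, fun hh => hz.2 (by rw [show z = w from hh]; rfl)⟩)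
  refine ⟨c '' A1, c '' A2, ?_, ?_, ?_, u1, hu1, u2, hu2, v1, hv1, v2, hv2, ?_⟩
  · rw [Set.disjoint_image_iff Subtype.val_injective]; exact hd
  · rintro _ ⟨x, -, rfl⟩; exact x.2
  · rintro _ ⟨x, -, rfl⟩; exact x.2
  · rcases hh with hh | hh
    · exact Or.inl ⟨conn_up hh.1, conn_up hh.2⟩
    · exact Or.inr ⟨conn_up hh.1, conn_up hh.2⟩

theorem Conn.fin (h : Conn G A u v) : ∃ F : Set V, F.Finite ∧ F ⊆ A ∧ Conn G F u v := by
  induction h with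
  | refl h => exact ⟨{u}, Set.finite_singleton u, by simpa using h, .refl rfl⟩
  | @step p q h0 h1 h2 ih =>
    obtain ⟨F, hF, hFA, hc⟩ := ih
    exact ⟨F ∪ {q}, hF.union (Set.finite_singleton q), Set.union_subset hFA (by simpa using h2),
      .step (hc.mono Set.subset_union_left) h1 (Or.inr rfl)⟩

theorem fan (hcut : Cut G Set.univ a b) (ab : a ≠ b) (hva : v ≠ a) (hvb : v ≠ b) :
    ∃ A1 A2 : Set V, Disjoint A1 A2 ∧ v ∉ A1 ∧ v ∉ A2 ∧ ∃ v1 v2, G.Adj v v1 ∧ G.Adj v v2 ∧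
      Conn G A1 a v1 ∧ Conn G A2 b v2 := by
  have hF : ∀ w, ∃ F : Set V, F.Finite ∧ (v ≠ w → w ∉ F ∧ ∃ e, (e = a ∨ e = b) ∧ Conn G F v e) := by
    intro w
    by_cases hvw : v = w
    · exact ⟨∅, Set.finite_empty, fun h => absurd hvw h⟩
    · obtain ⟨e, he, hc⟩ := hcut w v trivial hvw
      obtain ⟨F, hF, hFs, hc'⟩ := hc.fin
      exact ⟨F, hF, fun _ => ⟨fun hh => (hFs hh).2 rfl, e, he, hc'⟩⟩
  choose F hFf hFp using hF
  let I : Set V := F a ∪ {a, b}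
  have hI : I.Finite := (hFf a).union (by simp)
  let B : Set V := ⋃ w ∈ I, F w
  have hB : B.Finite := hI.biUnion fun w _ => hFf w
  have hcB : ∀ w, v ≠ w → ∃ e, (e = a ∨ e = b) ∧ Conn G (B \ {w}) v e := by
    intro w hvw
    have main : ∀ q ∈ I, v ≠ q → w ∉ F q → ∃ e, (e = a ∨ e = b) ∧ Conn G (B \ {w}) v e := by
      intro q hq hvq hw
      obtain ⟨-, e, he, hc⟩ := hFp q hvq
      refine ⟨e, he, hc.mono fun z hz => ⟨Set.mem_biUnion hq hz, ?_⟩⟩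
      rintro rfl
      exact hw hz
    by_cases hw : w ∈ F a
    · exact main w (Or.inl hw) hvw (hFp w hvw).1
    · exact main a (Or.inr (Or.inl rfl)) hva hw
  have hcN : ∀ w, v ≠ w → ∃ e, (e = a ∨ e = b) ∧ ∃ z ∈ G.neighborSet v, Conn G ((B \ {v}) \ {w}) e z := by
    intro w hvw
    obtain ⟨e, he, hc⟩ := hcB w hvw
    have hev : e ≠ v := by rcases he with rfl | rfl; exacts [hva.symm, hvb.symm]
    obtain ⟨x, hx, y, hy, hyK, exy, hcx⟩ := hc.symm.exit {v}ᶜ hev (fun hh => hh rfl)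
    have : y = v := not_not.1 hyK
    subst this
    refine ⟨e, he, x, exy.symm, hcx.mono ?_⟩
    rintro z ⟨⟨h1, h2⟩, h3⟩
    exact ⟨⟨h1, h3⟩, h2⟩
  have h1 : ∃ u ∈ ({a} : Set V), ∃ z ∈ G.neighborSet v, Conn G (B \ {v}) u z := by
    obtain ⟨e, he, z, hz, hc⟩ := hcN b hvb
    exact ⟨e, he.resolve_right hc.left.2, z, hz, hc.mono Set.sdiff_subset⟩
  have h2 : ∃ u ∈ ({b} : Set V), ∃ z ∈ G.neighborSet v, Conn G (B \ {v}) u z := by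
    obtain ⟨e, he, z, hz, hc⟩ := hcN a hva
    exact ⟨e, he.resolve_left hc.left.2, z, hz, hc.mono Set.sdiff_subset⟩
  have h3 : ∃ u ∈ ({a} : Set V) ∪ {b}, ∃ z ∈ G.neighborSet v, Conn G (B \ {v}) u z := by
    obtain ⟨u, hu, h⟩ := h1
    exact ⟨u, Or.inl hu, h⟩
  have hw : ∀ w, ∃ u ∈ ({a} : Set V) ∪ {b}, ∃ z ∈ G.neighborSet v ∪ G.neighborSet v,
      Conn G ((B \ {v}) \ {w}) u z := by
    intro w
    rw [Set.union_self (G.neighborSet v)]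
    by_cases hvw : v = w
    · subst hvw
      rw [Set.sdiff_singleton_eq_self (fun hh => hh.2 rfl)]
      exact h3
    · obtain ⟨e, he, z, hz, hc⟩ := hcN w hvw
      exact ⟨e, he, z, hz, hc⟩
  obtain ⟨A1, A2, hd, hA1, hA2, _, rfl, _, rfl, v1, hv1, v2, hv2, hh⟩ := link_set (G := G) (hB.subset (Set.sdiff_subset (t := {v})))
    {a} {b} (G.neighborSet v) (G.neighborSet v) (by rwa [Set.union_self (G.neighborSet v)])
    (by rwa [Set.union_self (G.neighborSet v)]) h3 h3 hw
  refine ⟨A1, A2, hd, fun hh => (hA1 hh).2 rfl, fun hh => (hA2 hh).2 rfl, ?_⟩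
  rcases hh with hh | hh
  · exact ⟨v1, v2, hv1, hv2, hh.1, hh.2⟩
  · exact ⟨v2, v1, hv2, hv1, hh.1, hh.2⟩

def ball (G : SimpleGraph V) (H U : Set V) : ℕ → Set V
  | 0 => U
  | n + 1 => ball G H U n ∪ {v | v ∈ H ∧ ∃ u ∈ ball G H U n, G.Adj u v}

variable {H U : Set V}

theorem ball_mono {m n : ℕ} (h : m ≤ n) : ball G H U m ⊆ ball G H U n := by
  induction h with
  | refl => exact subset_rfl
  | step _ ih => exact ih.trans Set.subset_union_left

theorem ball_sub (hU : U ⊆ H) (n : ℕ) : ball G H U n ⊆ H := by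
  induction n with
  | zero => exact hU
  | succ n ih => exact Set.union_subset ih fun x hx => hx.1

theorem ball_fin (hU : U ⊆ H) (hUf : U.Finite) (hf : ∀ v ∈ H, (G.neighborSet v).Finite) (n : ℕ) :
    (ball G H U n).Finite := by
  induction n with
  | zero => exact hUf
  | succ n ih =>
    refine ih.union ((ih.biUnion (t := fun u => G.neighborSet u) fun u hu => hf u (ball_sub hU n hu)).subset ?_)
    rintro v ⟨-, u, hu, e⟩
    exact Set.mem_biUnion hu e

theorem ball_r {n j : ℕ} (h : R G A u v n) : A ⊆ H → v ∈ ball G H U j → u ∈ ball G H U (j + n) := by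
  induction h with
  | nil _ => exact fun _ h => h
  | cons h1 h2 _ ih =>
    intro hA hv
    exact Or.inr ⟨hA h1, _, ih (Set.sdiff_subset.trans hA) hv, h2.symm⟩

theorem reduce (hcut : Cut G Set.univ a b) (ab : a ≠ b)
    (hf : ∀ v, v ≠ a → v ≠ b → (G.neighborSet v).Finite) {v0 : V} (h0a : v0 ≠ a) (h0b : v0 ≠ b) (N : ℕ)
    (hn : ¬ Reach G Set.univ a b N) :
    ∃ W : Set V, W.Finite ∧ a ∈ W ∧ b ∈ W ∧ v0 ∈ W ∧ Cut G W a b ∧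
      ∀ v ∈ W, v ≠ a → v ≠ b → G.neighborSet v ⊆ W := by
  set H : Set V := Set.univ \ {a, b} with hH
  have memH : ∀ z, z ≠ a → z ≠ b → z ∈ H := fun z h1 h2 => ⟨trivial, by simp [h1, h2]⟩
  have Ha : ∀ z ∈ H, z ≠ a := fun z hz h => hz.2 (Or.inl h)
  have Hb : ∀ z ∈ H, z ≠ b := fun z hz h => hz.2 (Or.inr h)
  have h0H := memH v0 h0a h0b
  set C := cmp G H v0 with hC
  have hCH : C ⊆ H := cmp_sub
  have hCf : C.Finite := by
    obtain ⟨x, hx, eax⟩ := cut_adj hcut ab (v := v0) trivial h0a h0b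
    obtain ⟨y, hy, eby⟩ := cut_adj hcut.symm ab.symm (v := v0) trivial h0b h0a
    rw [Set.pair_comm] at hy
    obtain ⟨F2, hF2, hF2H, hc2⟩ := hy.fin
    have hyF : y ∈ cmp G F2 v0 := hc2
    set U := cmp G F2 v0 with hU
    have h0U : v0 ∈ U := Conn.refl hc2.left
    have hUH : U ⊆ H := cmp_sub.trans hF2H
    have hUf : U.Finite := hF2.subset cmp_sub
    have hbf := ball_fin hUH hUf (fun v hv => hf v (Ha v hv) (Hb v hv))
    have ra := (Conn.refl (G := G) (Set.mem_singleton a)).reach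
    have rb := (Conn.refl (G := G) (Set.mem_singleton b)).reach
    have near : ∀ x ∈ C, G.Adj a x → x ∈ ball G H U N := by
      intro x hx eax
      by_cases hxU : x ∈ U
      · exact ball_mono (Nat.zero_le N) hxU
      obtain ⟨p, hp, q, hq, hqU, epq, hcp⟩ := (Conn.symm hx).exit Uᶜ hxU (fun hh => hh h0U)
      replace hqU : q ∈ U := not_not.1 hqU
      obtain ⟨n, hr⟩ := hcp.exR
      have hp1 : p ∈ ball G H U 1 := Or.inr ⟨hcp.right.1, q, hqU, epq.symm⟩
      have hxb := ball_r hr Set.inter_subset_left hp1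
      refine ball_mono ?_ hxb
      by_contra hlt
      apply hn
      have g := ((ra.join eax ⟨n, le_rfl, hr⟩ (by
        rw [Set.disjoint_singleton_left]; exact fun hh => Ha a hh.1 rfl)).join epq (cmp_connd q hqU y hyF).reach (by
        rw [Set.disjoint_union_left, Set.disjoint_singleton_left]
        exact ⟨fun hh => Ha a (hUH hh) rfl, by
          rw [Set.disjoint_left]; exact fun z hz => hz.2⟩)).join eby.symm rb (by
        rw [Set.disjoint_singleton_right]
        rintro ((hh | hh) | hh)
        exacts [ab hh.symm, Hb b hh.1 rfl, Hb b (hUH hh) rfl])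
      exact (g.mono (Set.subset_univ _)).le (by omega)
    refine (hbf (N + N)).subset fun v hv => ?_
    by_contra hvb
    have hvH := hCH hv
    obtain ⟨A1, A2, hd, hv1, hv2, v1, v2, e1, e2, c1, c2⟩ := fan hcut ab (Ha v hvH) (Hb v hvH)
    obtain ⟨n, hr⟩ := c1.exR
    have hbA1 : b ∉ A1 := fun hh => Set.disjoint_left.1 hd hh c2.left
    have hnN : N ≤ n := by
      by_contra hlt
      cases hr with
      | nil _ => exact hvb (ball_mono (by omega) (near v hv e1.symm))
      | @cons _ _ x _ n h1 h2 h3 =>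
        have hsub : A1 \ {a} ⊆ H := fun z hz => memH z hz.2 (by rintro rfl; exact hbA1 hz.1)
        have hv1C : v1 ∈ C := cmp_closed hv (hsub h3.right) e1
        have hxC : x ∈ C := Conn.trans hv1C (h3.symm.conn.mono hsub)
        have := ball_r h3.symm hsub (near x hxC h2)
        have : v ∈ ball G H U (N + n + 1) := Or.inr ⟨hvH, v1, this, e1.symm⟩
        exact hvb (ball_mono (by omega) this)
    apply hn
    have rv := (Conn.refl (G := G) (Set.mem_singleton v)).reach
    have r1 : Reach G A1 a v1 n := ⟨n, le_rfl, hr⟩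
    have g := (r1.join e1.symm rv (by rwa [Set.disjoint_singleton_right])).join e2 c2.symm.reach (by
      rw [Set.disjoint_union_left, Set.disjoint_singleton_left]; exact ⟨hd, hv2⟩)
    exact (g.mono (Set.subset_univ _)).le (by omega)
  refine ⟨C ∪ {a, b}, hCf.union (by simp), Or.inr (Or.inl rfl), Or.inr (Or.inr rfl), Or.inl (Conn.refl h0H), ?_, ?_⟩
  · rintro w v (hv | rfl | rfl) hvw
    · obtain ⟨e, he, hcn⟩ := hcut w v trivial hvw
      have heK : e ∉ C := by
        rcases he with rfl | rfl
        · exact fun hh => Ha _ (hCH hh) rfl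
        · exact fun hh => Hb _ (hCH hh) rfl
      obtain ⟨x, hx, y, hy, hyK, exy, hcx⟩ := hcn.exit C hv heK
      have hyst : y = a ∨ y = b := by
        by_contra hh
        push Not at hh
        exact hyK (cmp_closed hx (memH y hh.1 hh.2) exy)
      refine ⟨y, hyst, Conn.step (hcx.mono ?_) exy ⟨Or.inr hyst, hy.2⟩⟩
      rintro z ⟨⟨_, hz⟩, hzK⟩
      exact ⟨Or.inl hzK, hz⟩
    · exact ⟨v, Or.inl rfl, .refl ⟨Or.inr (Or.inl rfl), hvw⟩⟩
    · exact ⟨v, Or.inr rfl, .refl ⟨Or.inr (Or.inr rfl), hvw⟩⟩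
  · rintro v (hv | rfl | rfl) hva hvb
    · intro z hz
      by_cases h1 : z = a
      · exact Or.inr (Or.inl h1)
      by_cases h2 : z = b
      · exact Or.inr (Or.inr h2)
      exact Or.inl (cmp_closed hv (memH z h1 h2) hz)
    · exact absurd rfl hva
    · exact absurd rfl hvb

end infin
end SP

namespace SP

section fin
variable {V : Type*} {G : SimpleGraph V} {a b u v : V}

noncomputable def ff (k d : ℕ) : ℕ := ⌈(2 : ℝ) ^ ((d : ℝ) / (k + 2))⌉₊

theorem ff1 (k : ℕ) : ∀ d ≤ k + 2, ff k d ≤ 2 := by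
  intro d hd
  unfold ff
  rw [Nat.ceil_le]
  have hk : (0 : ℝ) < (k : ℝ) + 2 := by positivity
  have hd' : (d : ℝ) ≤ k + 2 := by exact_mod_cast hd
  calc (2 : ℝ) ^ ((d : ℝ) / (k + 2)) ≤ (2 : ℝ) ^ (1 : ℝ) :=
        Real.rpow_le_rpow_of_exponent_le (by norm_num) ((div_le_one hk).2 hd')
    _ = ((2 : ℕ) : ℝ) := by norm_num

theorem ff2 (k : ℕ) : ∀ D, ff k (D + k + 2) ≤ 2 * ff k D := by
  intro D
  have hk : (0 : ℝ) < (k : ℝ) + 2 := by positivity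
  rw [ff, Nat.ceil_le]
  have h : ((D + k + 2 : ℕ) : ℝ) / (k + 2) = (D : ℝ) / (k + 2) + 1 := by
    push_cast; field_simp; ring
  rw [h, Real.rpow_add (by norm_num), Real.rpow_one]
  have := Nat.le_ceil ((2 : ℝ) ^ ((D : ℝ) / (k + 2)))
  unfold ff
  push_cast
  linarith

theorem ff3 (k : ℕ) : ∀ D, 1 ≤ D → 2 ≤ ff k D := by
  intro D hD
  have hk : (0 : ℝ) < (k : ℝ) + 2 := by positivity
  have hD' : (0 : ℝ) < D := by exact_mod_cast hD
  have : 1 < ff k D := by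
    unfold ff
    rw [Nat.lt_ceil]
    push_cast
    exact Real.one_lt_rpow (by norm_num) (by positivity)
  omega

theorem cut_univ (h2 : TwoConnected G) (ab : a ≠ b) : Cut G Set.univ a b := by
  intro w v _ hvw
  have key : ∀ e, e ≠ w → Conn G (Set.univ \ {w}) v e := by
    intro e he
    obtain ⟨p⟩ := (h2.2 w).preconnected ⟨v, by simpa using hvw⟩ ⟨e, by simpa using he⟩
    have gen : ∀ (x y : ((⊤ : G.Subgraph).deleteVerts {w}).verts),
        ((⊤ : G.Subgraph).deleteVerts {w}).coe.Walk x y → Conn G (Set.univ \ {w}) x y := by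
      intro x y p
      induction p with
      | @nil x => exact .refl ⟨trivial, x.2.2⟩
      | @cons x y z h p ih =>
        refine Conn.trans (Conn.edge ⟨trivial, x.2.2⟩ ⟨trivial, y.2.2⟩ ?_) ih
        exact SimpleGraph.Subgraph.Adj.adj_sub (show ((⊤ : G.Subgraph).deleteVerts {w}).Adj x y from h)
    exact gen _ _ p
  by_cases hw : w = a
  · exact ⟨b, Or.inr rfl, key b (by rw [hw]; exact ab.symm)⟩
  · exact ⟨a, Or.inl rfl, key a (fun h => hw h.symm)⟩

theorem nb_image {W : Set V} (S : Set W) (v : W) :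
    ((G.induce W).neighborSet v ∩ S).ncard = (G.neighborSet (v : V) ∩ (fun x : W => (x : V)) '' S).ncard := by
  rw [← Set.ncard_image_of_injective _ (Subtype.val_injective (p := (· ∈ W)))]
  congr 1
  ext z
  constructor
  · rintro ⟨x, ⟨h1, h2⟩, rfl⟩
    exact ⟨h1, x, h2, rfl⟩
  · rintro ⟨h1, x, h2, rfl⟩
    exact ⟨x, ⟨h1, h2⟩, rfl⟩

theorem split_of {k : ℕ} (W : Set V)
    (hsplit : ∀ (H : G.Subgraph) (x y : V), x ∈ H.verts → y ∈ H.verts → x ≠ y →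
      ∃ X Y : Set V, X ∪ Y = H.verts ∧ Disjoint X Y ∧ x ∈ X ∧ y ∈ Y ∧
        (∀ v ∈ X, (H.neighborSet v).ncard - k ≤ ((H.induce X).neighborSet v).ncard) ∧
        (∀ v ∈ Y, (H.neighborSet v).ncard - k ≤ ((H.induce Y).neighborSet v).ncard)) :
    Split (G.induce W) k := by
  intro S x y hx hy hxy
  let c : W → V := fun x => x
  obtain ⟨X, Y, hun, hd, hxX, hyY, dX, dY⟩ := hsplit ((⊤ : G.Subgraph).induce (c '' S)) x y ⟨x, hx, rfl⟩ ⟨y, hy, rfl⟩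
    (fun h => hxy (Subtype.ext h))
  have hun' : X ∪ Y = c '' S := hun
  have im : ∀ Z : Set V, Z ⊆ c '' S → c '' (c ⁻¹' Z) = Z := by
    intro Z hZ
    refine Set.image_preimage_eq_of_subset (hZ.trans ?_)
    rintro _ ⟨x, -, rfl⟩
    exact ⟨x, rfl⟩
  have nbS : ∀ v ∈ c '' S, ((⊤ : G.Subgraph).induce (c '' S)).neighborSet v = G.neighborSet v ∩ c '' S := by
    intro v hv
    ext z
    simp only [SimpleGraph.Subgraph.mem_neighborSet, SimpleGraph.Subgraph.induce_adj,
      SimpleGraph.Subgraph.top_adj, Set.mem_inter_iff, SimpleGraph.mem_neighborSet]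
    tauto
  have nbZ : ∀ Z ⊆ c '' S, ∀ v ∈ Z,
      (((⊤ : G.Subgraph).induce (c '' S)).induce Z).neighborSet v = G.neighborSet v ∩ Z := by
    intro Z hZ v hv
    ext z
    simp only [SimpleGraph.Subgraph.mem_neighborSet, SimpleGraph.Subgraph.induce_adj,
      SimpleGraph.Subgraph.top_adj, Set.mem_inter_iff, SimpleGraph.mem_neighborSet]
    constructor
    · rintro ⟨-, h1, -, -, h2⟩
      exact ⟨h2, h1⟩
    · rintro ⟨h1, h2⟩
      exact ⟨hv, h2, hZ hv, hZ h2, h1⟩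
  have main : ∀ Z ⊆ c '' S, (∀ v ∈ Z, (((⊤ : G.Subgraph).induce (c '' S)).neighborSet v).ncard - k ≤
      ((((⊤ : G.Subgraph).induce (c '' S)).induce Z).neighborSet v).ncard) →
      ∀ v ∈ c ⁻¹' Z, ((G.induce W).neighborSet v ∩ S).ncard ≤ ((G.induce W).neighborSet v ∩ c ⁻¹' Z).ncard + k := by
    intro Z hZ h v hv
    have := h v hv
    rw [nbS v (hZ hv), nbZ Z hZ v hv] at this
    have i1 := nb_image (G := G) S v
    have i2 := nb_image (G := G) (c ⁻¹' Z) v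
    change _ = (G.neighborSet (v : V) ∩ c '' S).ncard at i1
    change _ = (G.neighborSet (v : V) ∩ c '' (c ⁻¹' Z)).ncard at i2
    rw [im Z hZ] at i2
    omega
  have hXS : X ⊆ c '' S := by rw [← hun']; exact Set.subset_union_left
  have hYS : Y ⊆ c '' S := by rw [← hun']; exact Set.subset_union_right
  refine ⟨c ⁻¹' X, c ⁻¹' Y, ?_, hd.preimage c, hxX, hyY, main X hXS dX, main Y hYS dY⟩
  rw [← Set.preimage_union, hun']
  exact Set.preimage_image_eq _ Subtype.val_injective

theorem final {k d : ℕ} (h2 : TwoConnected G) (hab : a ≠ b)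
    (hdeg : ∀ v : V, v ≠ a → v ≠ b → d ≤ (G.neighborSet v).ncard)
    (hsplit : ∀ (H : G.Subgraph) (x y : V), x ∈ H.verts → y ∈ H.verts → x ≠ y →
      ∃ X Y : Set V, X ∪ Y = H.verts ∧ Disjoint X Y ∧ x ∈ X ∧ y ∈ Y ∧
        (∀ v ∈ X, (H.neighborSet v).ncard - k ≤ ((H.induce X).neighborSet v).ncard) ∧
        (∀ v ∈ Y, (H.neighborSet v).ncard - k ≤ ((H.induce Y).neighborSet v).ncard)) :
    Reach G Set.univ a b (ff k d) := by
  have hcut := cut_univ h2 hab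
  obtain ⟨v0, h0a, h0b⟩ : ∃ v0, v0 ≠ a ∧ v0 ≠ b := by
    obtain ⟨x, y, z, hxy, hxz, hyz⟩ := h2.1
    by_contra hc
    push Not at hc
    have hx : x = a ∨ x = b := or_iff_not_imp_left.2 (hc x)
    have hy : y = a ∨ y = b := or_iff_not_imp_left.2 (hc y)
    have hz : z = a ∨ z = b := or_iff_not_imp_left.2 (hc z)
    rcases hx with rfl | rfl <;> rcases hy with rfl | rfl <;> rcases hz with rfl | rfl <;> tauto
  by_cases hd : d = 0
  · exact (base hcut hab trivial trivial ⟨v0, trivial, h0a, h0b⟩).le (ff1 k d (by omega))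
  by_contra hn
  obtain ⟨W, hW, aW, bW, h0W, hcW, hnW⟩ := reduce hcut hab (fun v hva hvb => by
    apply Set.finite_of_ncard_pos
    have := hdeg v hva hvb
    omega) h0a h0b (ff k d) hn
  have : Finite W := hW
  have hr := core (split_of W hsplit) (ff k) (ff1 k) (ff2 k) (ff3 k) _ Set.univ ⟨a, aW⟩ ⟨b, bW⟩ d rfl trivial trivial
    (fun h => hab (congrArg Subtype.val h)) (by
      intro w v _ hvw
      obtain ⟨e, he, hc⟩ := hcW w v v.2 (fun h => hvw (Subtype.ext h))
      refine ⟨⟨e, hc.right.1⟩, ?_, (conn_down hc Set.sdiff_subset v.2 hc.right.1).mono ?_⟩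
      · rcases he with rfl | rfl
        · exact Or.inl rfl
        · exact Or.inr rfl
      · intro z hz
        exact ⟨trivial, fun hh => hz.2 (by rw [show z = w from hh]; rfl)⟩)
    ⟨⟨v0, h0W⟩, trivial, fun h => h0a (congrArg Subtype.val h), fun h => h0b (congrArg Subtype.val h)⟩ (by
      intro v _ hva hvb
      have h1 : (v : V) ≠ a := fun h => hva (Subtype.ext h)
      have h2 : (v : V) ≠ b := fun h => hvb (Subtype.ext h)
      rw [nb_image, Set.image_univ, Subtype.range_coe, Set.inter_eq_left.2 (hnW v v.2 h1 h2)]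
      exact hdeg v h1 h2)
  obtain ⟨m, hm, hr⟩ := hr
  exact hn ⟨m, hm, (r_up hr).mono (Set.subset_univ _)⟩

end fin
end SP

/-- Let `G` be a 2-connected graph with distinct vertices `a, b` such that every
vertex `v ∉ {a,b}` has degree at least `d`.  Suppose every subgraph `H` of `G` has
the splitting property: any two distinct vertices of `H` can be separated by a
partition of the vertices of `H` in which every vertex loses at most `k` neighbours.
Then `G` contains an `a-b` path of length at least `2^(d/(k+2))`. -/
theorem splitting_property_long_path {V : Type*} (G : SimpleGraph V) (k d : ℕ)
    (h2 : TwoConnected G) (a b : V) (hab : a ≠ b)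
    (hdeg : ∀ v : V, v ≠ a → v ≠ b → d ≤ (G.neighborSet v).ncard)
    (hsplit : ∀ (H : G.Subgraph) (x y : V), x ∈ H.verts → y ∈ H.verts → x ≠ y →
      ∃ X Y : Set V, X ∪ Y = H.verts ∧ Disjoint X Y ∧ x ∈ X ∧ y ∈ Y ∧
        (∀ v ∈ X, (H.neighborSet v).ncard - k ≤ ((H.induce X).neighborSet v).ncard) ∧
        (∀ v ∈ Y, (H.neighborSet v).ncard - k ≤ ((H.induce Y).neighborSet v).ncard)) :
    ∃ p : G.Walk a b, p.IsPath ∧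
      (2 : ℝ) ^ ((d : ℝ) / (k + 2)) ≤ (p.length : ℝ) := by
  obtain ⟨m, hm, hr⟩ := SP.final h2 hab hdeg hsplit
  obtain ⟨p, hp, hl, -⟩ := hr.walk
  refine ⟨p, hp, ?_⟩
  rw [hl]
  exact Nat.ceil_le.1 hm
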